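/- arXiv:1202.0015 — 2 statements merged into one kernel-verified Lean document; each statement's English description precedes it below -/
import Mathlib

section
/- (Entropy derivative for exponential noise) Let X be a nonnegative real random variable whose moment generating function exists and whose density f_X is bounded, and let W be an independent exponential random variable with density f_W(w) = e^{−w} for w ≥ 0 (and 0 otherwise). For a > 0 set f_{Y|X}(y|x;a) = a^{−1/2} f_W((y−x)/√a) and f_Y(y;a) = ∫ f_X(x) f_{Y|X}(y|x;a) dx. Then the differential entropy h(a) = −∫ f_Y(y;a) log f_Y(y;a) dy satisfies d/da h(a) = (1/(2a√a)) · ( √a − E[X] + ∫ f_X(y) m(y;a) dy ), where m(y;a) = ∫ x f_X(x) f_{Y|X}(y|x;a) dx / f_Y(y;a) is the posterior mean of X given Y = y. -/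
open MeasureTheory Filter

/-!
Write `t = √a` and let `g`, `q` be the densities of `X + t S`, where `S` is independent of `X` and
Gamma distributed with shape `1`, `2` respectively; so `g` is the output density. The Gamma kernels
give `∂ₜ g = (q - g) / t` and, almost everywhere, `∂ᵧ q = (g - q) / t` and `∂ᵧ g = (f - g) / t`,
while `q / g = (y - m(y)) / t`. Hence the derivative of `∫ g log g` in `t` is
`t⁻¹ ∫ (q - g) (log g + 1)`, and integrating by parts against `q - g = -t ∂ᵧ q` turns this into
`t⁻¹ (∫ f q / g - 1)`. The density `g` may vanish, so the integration by parts is carried out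
with `log (g + ε)` and `ε → 0`. Domination, locally uniformly in `t`, comes from `g + q` being at
most a multiple of the density at scale `4 t`, and `|log g|` growing at most linearly in `y`.
-/

open ProbabilityTheory Set Topology

section GammaDensity

lemma gammaPDFReal_one (r x : ℝ) :
    gammaPDFReal 1 r x = if 0 ≤ x then r * Real.exp (-(r * x)) else 0 := by
  simp [gammaPDFReal]

lemma gammaPDFReal_two (r x : ℝ) :
    gammaPDFReal 2 r x = if 0 ≤ x then r ^ 2 * x * Real.exp (-(r * x)) else 0 := by
  norm_num [gammaPDFReal]

lemma integrable_gammaPDFReal {n r : ℝ} (hn : 0 < n) (hr : 0 < r) :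
    Integrable (gammaPDFReal n r) := by
  refine ⟨(measurable_gammaPDFReal n r).aestronglyMeasurable, ?_⟩
  rw [hasFiniteIntegral_iff_ofReal (ae_of_all _ (gammaPDFReal_nonneg hn hr))]
  exact (lintegral_gammaPDF_eq_one hn hr).trans_lt ENNReal.one_lt_top

lemma integral_gammaPDFReal {n r : ℝ} (hn : 0 < n) (hr : 0 < r) :
    ∫ x, gammaPDFReal n r x = 1 := by
  rw [integral_eq_lintegral_of_nonneg_ae (ae_of_all _ (gammaPDFReal_nonneg hn hr))
    (measurable_gammaPDFReal n r).aestronglyMeasurable]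
  exact (congrArg ENNReal.toReal (lintegral_gammaPDF_eq_one hn hr)).trans ENNReal.toReal_one

lemma exp_neg_mul_rpow_le_Gamma {n v : ℝ} (hn : 1 ≤ n) (hv : 0 ≤ v) :
    Real.exp (-v) * v ^ (n - 1) ≤ Real.Gamma n := by
  have hn0 : 0 < n := one_pos.trans_le hn
  have hint := Real.GammaIntegral_convergent hn0
  calc Real.exp (-v) * v ^ (n - 1) = ∫ x in Ioi v, Real.exp (-x) * v ^ (n - 1) := by
        rw [integral_mul_const, integral_exp_neg_Ioi]
    _ ≤ ∫ x in Ioi v, Real.exp (-x) * x ^ (n - 1) := by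
      refine setIntegral_mono_on ((integrableOn_exp_neg_Ioi v).mul_const _)
        (hint.mono_set (Ioi_subset_Ioi hv)) measurableSet_Ioi fun x hx => ?_
      have : v ≤ x := (mem_Ioi.1 hx).le
      gcongr
    _ ≤ ∫ x in Ioi 0, Real.exp (-x) * x ^ (n - 1) := by
      refine setIntegral_mono_set hint ?_ (Ioi_subset_Ioi hv).eventuallyLE
      filter_upwards [ae_restrict_mem measurableSet_Ioi] with x hx
      have : 0 ≤ x := (mem_Ioi.1 hx).le
      positivity
    _ = Real.Gamma n := (Real.Gamma_eq_integral hn0).symm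

lemma gammaPDFReal_le_rate {n r : ℝ} (hn : 1 ≤ n) (hr : 0 < r) (u : ℝ) :
    gammaPDFReal n r u ≤ r := by
  rw [gammaPDFReal]
  split_ifs with hu
  · have hG : 0 < Real.Gamma n := Real.Gamma_pos_of_pos (one_pos.trans_le hn)
    calc r ^ n / Real.Gamma n * u ^ (n - 1) * Real.exp (-(r * u))
        = r * (Real.exp (-(r * u)) * (r * u) ^ (n - 1) / Real.Gamma n) := by
          rw [Real.mul_rpow hr.le hu, Real.rpow_sub_one hr.ne']
          field_simp
      _ ≤ r := mul_le_of_le_one_right hr.le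
        ((div_le_one hG).2 (exp_neg_mul_rpow_le_Gamma hn (mul_nonneg hr.le hu)))
  · exact hr.le

lemma abs_gammaPDFReal_two_sub_one_le {r : ℝ} (hr : 0 < r) (u : ℝ) :
    |gammaPDFReal 2 r u - gammaPDFReal 1 r u| ≤ r :=
  abs_sub_le_of_nonneg_of_le
    (gammaPDFReal_nonneg two_pos hr u) (gammaPDFReal_le_rate one_le_two hr u)
    (gammaPDFReal_nonneg one_pos hr u) (gammaPDFReal_le_rate le_rfl hr u)

lemma mul_gammaPDFReal_one {r : ℝ} (hr : r ≠ 0) (u : ℝ) :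
    u * gammaPDFReal 1 r u = r⁻¹ * gammaPDFReal 2 r u := by
  rw [gammaPDFReal_one, gammaPDFReal_two]
  split_ifs
  · field_simp
  · simp

lemma hasDerivAt_gammaPDFReal_one_inv {t : ℝ} (ht : t ≠ 0) (u : ℝ) :
    HasDerivAt (fun s => gammaPDFReal 1 s⁻¹ u)
      (t⁻¹ * (gammaPDFReal 2 t⁻¹ u - gammaPDFReal 1 t⁻¹ u)) t := by
  simp only [gammaPDFReal_one, gammaPDFReal_two]
  split_ifs
  · have hinv := hasDerivAt_inv ht
    refine (hinv.mul (hinv.mul_const u).neg.exp).congr_deriv ?_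
    simp only [Pi.neg_apply]
    field_simp
    ring
  · simpa using hasDerivAt_const t (0 : ℝ)

lemma gammaPDFReal_one_add_two_le {s r : ℝ} (hs : 0 < s) (hr : 2 * s ≤ r) (u : ℝ) :
    gammaPDFReal 1 s⁻¹ u + gammaPDFReal 2 s⁻¹ u ≤ 2 * r / s * gammaPDFReal 1 r⁻¹ u := by
  simp only [gammaPDFReal_one, gammaPDFReal_two]
  split_ifs with hu
  · have hr0 : 0 < r := by linarith
    have hlin : 1 + s⁻¹ * u ≤ 2 * Real.exp ((2 * s)⁻¹ * u) := by
      have := Real.add_one_le_exp ((2 * s)⁻¹ * u)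
      rw [mul_inv] at this ⊢
      linarith
    have hexp : Real.exp (-((2 * s)⁻¹ * u)) ≤ Real.exp (-(r⁻¹ * u)) := by gcongr
    calc s⁻¹ * Real.exp (-(s⁻¹ * u)) + s⁻¹ ^ 2 * u * Real.exp (-(s⁻¹ * u))
        = s⁻¹ * ((1 + s⁻¹ * u) * Real.exp (-(s⁻¹ * u))) := by ring
      _ ≤ s⁻¹ * (2 * Real.exp ((2 * s)⁻¹ * u) * Real.exp (-(s⁻¹ * u))) := by gcongr
      _ = 2 * s⁻¹ * Real.exp (-((2 * s)⁻¹ * u)) := by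
        rw [mul_assoc 2, ← Real.exp_add]; ring_nf
      _ ≤ 2 * s⁻¹ * Real.exp (-(r⁻¹ * u)) := by gcongr
      _ = 2 * r / s * (r⁻¹ * Real.exp (-(r⁻¹ * u))) := by field_simp
  · simp

end GammaDensity

section AbsolutelyContinuous

lemma absolutelyContinuousOnInterval_comp_lipschitzOnWith {X Y : Type*} [PseudoMetricSpace X]
    [PseudoMetricSpace Y] {F : ℝ → X} {φ : X → Y} {K : NNReal} {s : Set X} {a b : ℝ}
    (hφ : LipschitzOnWith K φ s) (hF : AbsolutelyContinuousOnInterval F a b)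
    (hs : MapsTo F (uIcc a b) s) :
    AbsolutelyContinuousOnInterval (fun y => φ (F y)) a b := by
  rw [absolutelyContinuousOnInterval_iff] at hF ⊢
  intro ε hε
  obtain ⟨δ, hδ, hF⟩ := hF (ε / (K + 1)) (by positivity)
  refine ⟨δ, hδ, fun E hE hlen => ?_⟩
  have hsum := hF E hE hlen
  rw [lt_div_iff₀ (by positivity)] at hsum
  refine lt_of_le_of_lt ?_ hsum
  rw [Finset.sum_mul]
  refine Finset.sum_le_sum fun i hi => ?_
  obtain ⟨h₁, h₂⟩ := hE.1 i hi
  calc dist (φ (F (E.2 i).1)) (φ (F (E.2 i).2))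
      ≤ K * dist (F (E.2 i).1) (F (E.2 i).2) := hφ.dist_le_mul _ (hs h₁) _ (hs h₂)
    _ ≤ dist (F (E.2 i).1) (F (E.2 i).2) * (K + 1) := by
      rw [mul_comm]; gcongr; simp

lemma lipschitzOnWith_log_Ici {ε : NNReal} (hε : 0 < ε) :
    LipschitzOnWith ε⁻¹ Real.log (Ici (ε : ℝ)) := by
  refine (convex_Ici (ε : ℝ)).lipschitzOnWith_of_nnnorm_deriv_le (fun x hx => ?_) fun x hx => ?_
  · exact Real.differentiableAt_log (lt_of_lt_of_le (by simpa using hε) hx).ne'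
  · have hεx : ε ≤ ‖x‖₊ := (mem_Ici.1 hx).trans (le_abs_self x)
    rw [Real.deriv_log, nnnorm_inv]
    gcongr

lemma integral_eq_sub_of_absolutelyContinuousOnInterval {F F' : ℝ → ℝ} {a b : ℝ}
    (hac : AbsolutelyContinuousOnInterval F a b) (hF' : ∀ᵐ y, HasDerivAt F (F' y) y) :
    ∫ y in a..b, F' y = F b - F a := by
  rw [← hac.integral_deriv_eq_sub]
  refine intervalIntegral.integral_congr_ae ?_
  filter_upwards [hF'] with y hy _ using hy.deriv.symm

lemma integral_eq_zero_of_absolutelyContinuousOnInterval {F F' : ℝ → ℝ}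
    (hac : ∀ a b, AbsolutelyContinuousOnInterval F a b) (hderiv : ∀ᵐ y, HasDerivAt F (F' y) y)
    (hF' : Integrable F') (hF : Integrable F) : ∫ y, F' y = 0 := by
  have hFTC : ∀ y, F 0 + ∫ x in (0 : ℝ)..y, F' x = F y := fun y => by
    rw [integral_eq_sub_of_absolutelyContinuousOnInterval (hac _ _) hderiv]; ring
  have htop : Tendsto F atTop (𝓝 (F 0 + ∫ x in Ioi 0, F' x)) := by
    simpa only [hFTC, id] using
      (intervalIntegral_tendsto_integral_Ioi 0 hF'.integrableOn tendsto_id).const_add (F 0)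
  have hbot : Tendsto F atBot (𝓝 (F 0 - ∫ x in Iic 0, F' x)) := by
    refine ((intervalIntegral_tendsto_integral_Iic 0 hF'.integrableOn tendsto_id).const_sub
      (F 0)).congr fun y => ?_
    rw [integral_eq_sub_of_absolutelyContinuousOnInterval (hac _ _) hderiv, sub_sub_cancel, id]
  have htop0 : F 0 + ∫ x in Ioi 0, F' x = 0 := by
    refine IntegrableAtFilter.eq_zero_of_tendsto (hF.integrableAtFilter _) (fun s hs => ?_) htop
    obtain ⟨b, hb⟩ := mem_atTop_sets.1 hs
    exact top_le_iff.1 (Real.volume_Ici (a := b) ▸ measure_mono hb)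
  have hbot0 : F 0 - ∫ x in Iic 0, F' x = 0 := by
    refine IntegrableAtFilter.eq_zero_of_tendsto (hF.integrableAtFilter _) (fun s hs => ?_) hbot
    obtain ⟨b, hb⟩ := mem_atBot_sets.1 hs
    exact top_le_iff.1 (Real.volume_Iic (a := b) ▸ measure_mono hb)
  rw [← intervalIntegral.integral_Iic_add_Ioi hF'.integrableOn hF'.integrableOn (b := 0)]
  linarith

end AbsolutelyContinuous

/-- The density at `y` of `X + t * S`, where `X` has density `f` and `S` is independent of `X` with
the Gamma distribution of shape `n` and rate `1`. -/
noncomputable def gammaSmoothing (f : ℝ → ℝ) (n t y : ℝ) : ℝ :=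
  ∫ x, f x * gammaPDFReal n t⁻¹ (y - x)

section GammaSmoothing

variable {f : ℝ → ℝ} {n t : ℝ}

lemma integrable_mul_gammaPDFReal_sub (hn : 1 ≤ n) (ht : 0 < t) (hf : Integrable f) (y : ℝ) :
    Integrable fun x => f x * gammaPDFReal n t⁻¹ (y - x) := by
  refine hf.mul_bdd (c := t⁻¹)
    ((measurable_gammaPDFReal n t⁻¹).comp (measurable_const.sub measurable_id)).aestronglyMeasurable
    (ae_of_all _ fun x => ?_)
  rw [Real.norm_of_nonneg (gammaPDFReal_nonneg (one_pos.trans_le hn) (inv_pos.2 ht) _)]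
  exact gammaPDFReal_le_rate hn (inv_pos.2 ht) _

lemma gammaSmoothing_nonneg (hn : 0 < n) (ht : 0 < t) (hpos : ∀ x, 0 ≤ f x) (y : ℝ) :
    0 ≤ gammaSmoothing f n t y :=
  integral_nonneg fun x => mul_nonneg (hpos x) (gammaPDFReal_nonneg hn (inv_pos.2 ht) _)

lemma gammaSmoothing_of_neg (hsupp : ∀ x, x < 0 → f x = 0) {y : ℝ} (hy : y < 0) :
    gammaSmoothing f n t y = 0 := by
  refine integral_eq_zero_of_ae (ae_of_all _ fun x => ?_)
  rcases lt_or_ge x 0 with hx | hx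
  · simp [hsupp x hx]
  · simp [gammaPDFReal, not_le.2 (show y - x < 0 by linarith)]

lemma gammaSmoothing_le (hn : 1 ≤ n) (ht : 0 < t) (hf : Integrable f) (hpos : ∀ x, 0 ≤ f x)
    (y : ℝ) : gammaSmoothing f n t y ≤ (∫ x, f x) * t⁻¹ := by
  rw [← integral_mul_const]
  exact integral_mono (integrable_mul_gammaPDFReal_sub hn ht hf y) (hf.mul_const _) fun x =>
    mul_le_mul_of_nonneg_left (gammaPDFReal_le_rate hn (inv_pos.2 ht) _) (hpos x)

lemma gammaSmoothing_eq_convolution :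
    gammaSmoothing f n t = convolution f (gammaPDFReal n t⁻¹) (ContinuousLinearMap.mul ℝ ℝ) := rfl

lemma integrable_gammaSmoothing (hn : 0 < n) (ht : 0 < t) (hf : Integrable f) :
    Integrable (gammaSmoothing f n t) := by
  rw [gammaSmoothing_eq_convolution]
  exact hf.integrable_convolution _ (integrable_gammaPDFReal hn (inv_pos.2 ht))

lemma integral_gammaSmoothing (hn : 0 < n) (ht : 0 < t) (hf : Integrable f) :
    ∫ y, gammaSmoothing f n t y = ∫ x, f x := by
  rw [gammaSmoothing_eq_convolution, integral_convolution _ hf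
    (integrable_gammaPDFReal hn (inv_pos.2 ht)), integral_gammaPDFReal hn (inv_pos.2 ht),
    ContinuousLinearMap.mul_apply', mul_one]

lemma mul_gammaSmoothing_one_sub (ht : 0 < t) (hf : Integrable f)
    (hmean : Integrable fun x => x * f x) (y : ℝ) :
    y * gammaSmoothing f 1 t y - gammaSmoothing (fun x => x * f x) 1 t y =
      t * gammaSmoothing f 2 t y := by
  simp only [gammaSmoothing]
  rw [← integral_const_mul, ← integral_const_mul, ← integral_sub
    ((integrable_mul_gammaPDFReal_sub le_rfl ht hf y).const_mul y)
    (integrable_mul_gammaPDFReal_sub le_rfl ht hmean y)]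
  refine integral_congr_ae (ae_of_all _ fun x => ?_)
  have := mul_gammaPDFReal_one (inv_pos.2 ht).ne' (y - x)
  rw [inv_inv] at this
  linear_combination f x * this

lemma gammaSmoothing_two_le (ht : 0 < t) (hf : Integrable f) (hmean : Integrable fun x => x * f x)
    (hpos : ∀ x, 0 ≤ f x) (hsupp : ∀ x, x < 0 → f x = 0) (y : ℝ) :
    t * gammaSmoothing f 2 t y ≤ y * gammaSmoothing f 1 t y := by
  have hxf : ∀ x, 0 ≤ x * f x := fun x => by
    rcases lt_or_ge x 0 with hx | hx
    · simp [hsupp x hx]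
    · exact mul_nonneg hx (hpos x)
  rw [← mul_gammaSmoothing_one_sub ht hf hmean]
  linarith [gammaSmoothing_nonneg one_pos ht hxf y]

lemma integrable_mul_gammaSmoothing_one (ht : 0 < t) (hf : Integrable f)
    (hmean : Integrable fun x => x * f x) : Integrable fun y => y * gammaSmoothing f 1 t y := by
  refine ((integrable_gammaSmoothing one_pos ht hmean).add
    ((integrable_gammaSmoothing two_pos ht hf).const_mul t)).congr (ae_of_all _ fun y => ?_)
  simp only [Pi.add_apply, ← mul_gammaSmoothing_one_sub ht hf hmean]
  ring

lemma hasDerivAt_gammaSmoothing_one (ht : 0 < t) (hf : Integrable f) (y : ℝ) :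
    HasDerivAt (fun s => gammaSmoothing f 1 s y)
      (t⁻¹ * (gammaSmoothing f 2 t y - gammaSmoothing f 1 t y)) t := by
  have hint {n : ℝ} (hn : 1 ≤ n) {s : ℝ} (hs : 0 < s) :=
    integrable_mul_gammaPDFReal_sub hn hs hf y
  have hF' : Integrable fun x =>
      f x * (t⁻¹ * (gammaPDFReal 2 t⁻¹ (y - x) - gammaPDFReal 1 t⁻¹ (y - x))) :=
    (((hint one_le_two ht).sub (hint le_rfl ht)).const_mul t⁻¹).congr
      (ae_of_all _ fun x => by simp only [Pi.sub_apply]; ring)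
  have hbound : ∀ x, ∀ s ∈ Ioi (t / 2),
      ‖f x * (s⁻¹ * (gammaPDFReal 2 s⁻¹ (y - x) - gammaPDFReal 1 s⁻¹ (y - x)))‖
        ≤ ‖f x‖ * ((t / 2)⁻¹ * (t / 2)⁻¹) := fun x s hs => by
    have hts : t / 2 < s := hs
    have hs0 : 0 < s := (half_pos ht).trans hts
    rw [norm_mul, norm_mul, Real.norm_of_nonneg (inv_pos.2 hs0).le]
    gcongr
    exact (abs_gammaPDFReal_two_sub_one_le (inv_pos.2 hs0) _).trans (by gcongr)
  refine (hasDerivAt_integral_of_dominated_loc_of_deriv_le (Ioi_mem_nhds (half_lt_self ht))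
    ?_ (hint le_rfl ht) hF'.aestronglyMeasurable (ae_of_all _ hbound) (hf.norm.mul_const _)
    (ae_of_all _ fun x s hs => ?_)).2.congr_deriv ?_
  · filter_upwards [lt_mem_nhds ht] with s hs using (hint le_rfl hs).aestronglyMeasurable
  · exact (hasDerivAt_gammaPDFReal_one_inv ((half_pos ht).trans hs).ne' _).const_mul (f x)
  · rw [gammaSmoothing, gammaSmoothing, ← integral_sub (hint one_le_two ht) (hint le_rfl ht),
      ← integral_const_mul]
    exact integral_congr_ae (ae_of_all _ fun x => by ring)

lemma integrableOn_Iic_exp_mul_mul {r : ℝ} (hr : 0 ≤ r) (hf : Integrable f) (b : ℝ) :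
    IntegrableOn (fun x => Real.exp (r * x) * f x) (Iic b) := by
  refine hf.integrableOn.bdd_mul (c := Real.exp (r * b)) (by fun_prop) ?_
  filter_upwards [ae_restrict_mem measurableSet_Iic] with x hx
  rw [Real.norm_of_nonneg (Real.exp_nonneg _)]
  exact Real.exp_le_exp.2 (mul_le_mul_of_nonneg_left hx hr)

lemma gammaSmoothing_one_eq_primitive (ht : 0 < t) (hf : Integrable f) (c y : ℝ) :
    gammaSmoothing f 1 t y = t⁻¹ * Real.exp (-t⁻¹ * y) *
      ((∫ x in Iic c, Real.exp (t⁻¹ * x) * f x) + ∫ x in c..y, Real.exp (t⁻¹ * x) * f x) := by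
  have hint := integrableOn_Iic_exp_mul_mul (inv_pos.2 ht).le hf
  rw [← intervalIntegral.integral_Iic_sub_Iic (hint c) (hint y), add_sub_cancel,
    ← integral_const_mul, ← integral_indicator measurableSet_Iic, gammaSmoothing]
  refine integral_congr_ae (ae_of_all _ fun x => ?_)
  simp only [gammaPDFReal_one, indicator_apply, mem_Iic, sub_nonneg, mul_ite, mul_zero]
  congr 1
  rw [show -(t⁻¹ * (y - x)) = -t⁻¹ * y + t⁻¹ * x by ring, Real.exp_add]
  ring

lemma absolutelyContinuousOnInterval_gammaSmoothing_one (ht : 0 < t) (hf : Integrable f)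
    (a b : ℝ) : AbsolutelyContinuousOnInterval (gammaSmoothing f 1 t) a b := by
  have hexp : AbsolutelyContinuousOnInterval (fun y => t⁻¹ * Real.exp (-t⁻¹ * y)) a b :=
    ContDiffOn.absolutelyContinuousOnInterval (by fun_prop)
  have hprim : AbsolutelyContinuousOnInterval
      (fun y => ∫ x in a..y, Real.exp (t⁻¹ * x) * f x) a b :=
    (hf.intervalIntegrable.continuousOn_mul
      (by fun_prop)).absolutelyContinuousOnInterval_intervalIntegral left_mem_uIcc
  have hconst : AbsolutelyContinuousOnInterval
      (fun _ => ∫ x in Iic a, Real.exp (t⁻¹ * x) * f x) a b :=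
    contDiffOn_const.absolutelyContinuousOnInterval
  rw [funext (gammaSmoothing_one_eq_primitive ht hf a)]
  exact hexp.mul (hconst.add hprim)

lemma ae_hasDerivAt_gammaSmoothing_one (ht : 0 < t) (hf : Integrable f) :
    ∀ᵐ y, HasDerivAt (gammaSmoothing f 1 t) (t⁻¹ * (f y - gammaSmoothing f 1 t y)) y := by
  have hloc : LocallyIntegrable fun x => Real.exp (t⁻¹ * x) * f x :=
    hf.locallyIntegrable.continuous_mul (by fun_prop)
  filter_upwards [LocallyIntegrable.ae_hasDerivAt_integral hloc] with y hy
  rw [gammaSmoothing_one_eq_primitive ht hf 0, funext (gammaSmoothing_one_eq_primitive ht hf 0)]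
  have hexp := ((hasDerivAt_id' y).const_mul (-t⁻¹)).exp.const_mul t⁻¹
  refine (hexp.mul ((hy 0).const_add _)).congr_deriv ?_
  have : Real.exp (-t⁻¹ * y) * Real.exp (t⁻¹ * y) = 1 := by rw [← Real.exp_add]; simp
  linear_combination t⁻¹ * f y * this

lemma gammaSmoothing_two_eq (ht : 0 < t) (hf : Integrable f)
    (hmean : Integrable fun x => x * f x) (y : ℝ) :
    gammaSmoothing f 2 t y =
      t⁻¹ * (y * gammaSmoothing f 1 t y - gammaSmoothing (fun x => x * f x) 1 t y) := by
  rw [mul_gammaSmoothing_one_sub ht hf hmean, inv_mul_cancel_left₀ ht.ne']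

lemma absolutelyContinuousOnInterval_gammaSmoothing_two (ht : 0 < t) (hf : Integrable f)
    (hmean : Integrable fun x => x * f x) (a b : ℝ) :
    AbsolutelyContinuousOnInterval (gammaSmoothing f 2 t) a b := by
  rw [funext (gammaSmoothing_two_eq ht hf hmean)]
  have hid : AbsolutelyContinuousOnInterval (fun y : ℝ => y) a b :=
    ContDiffOn.absolutelyContinuousOnInterval (by fun_prop)
  have hac {f : ℝ → ℝ} (hf : Integrable f) :=
    absolutelyContinuousOnInterval_gammaSmoothing_one ht hf a b
  exact ((hid.mul (hac hf)).sub (hac hmean)).const_mul t⁻¹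

lemma ae_hasDerivAt_gammaSmoothing_two (ht : 0 < t) (hf : Integrable f)
    (hmean : Integrable fun x => x * f x) :
    ∀ᵐ y, HasDerivAt (gammaSmoothing f 2 t)
      (t⁻¹ * (gammaSmoothing f 1 t y - gammaSmoothing f 2 t y)) y := by
  filter_upwards [ae_hasDerivAt_gammaSmoothing_one ht hf,
    ae_hasDerivAt_gammaSmoothing_one ht hmean] with y hg hxg
  rw [gammaSmoothing_two_eq ht hf hmean, funext (gammaSmoothing_two_eq ht hf hmean)]
  refine ((((hasDerivAt_id' y).mul hg).sub hxg).const_mul t⁻¹).congr_deriv ?_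
  ring

lemma gammaSmoothing_one_eq_setIntegral_Iic (ht : 0 < t) (hf : Integrable f) (y : ℝ) :
    gammaSmoothing f 1 t y =
      t⁻¹ * Real.exp (-t⁻¹ * y) * ∫ x in Iic y, Real.exp (t⁻¹ * x) * f x := by
  rw [gammaSmoothing_one_eq_primitive ht hf y, intervalIntegral.integral_same, add_zero]

lemma gammaSmoothing_one_eq_zero_iff (ht : 0 < t) (hf : Integrable f) (hpos : ∀ x, 0 ≤ f x)
    (y : ℝ) : gammaSmoothing f 1 t y = 0 ↔ f =ᵐ[volume.restrict (Iic y)] 0 := by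
  rw [gammaSmoothing_one_eq_setIntegral_Iic ht hf, mul_eq_zero_iff_left (by positivity),
    integral_eq_zero_iff_of_nonneg (fun x => mul_nonneg (Real.exp_nonneg _) (hpos x))
      (integrableOn_Iic_exp_mul_mul (inv_pos.2 ht).le hf y)]
  simp [EventuallyEq]

lemma ae_eq_zero_of_gammaSmoothing_one_eq_zero (ht : 0 < t) (hf : Integrable f)
    (hpos : ∀ x, 0 ≤ f x) : ∀ᵐ y, gammaSmoothing f 1 t y = 0 → f y = 0 := by
  filter_upwards [ae_hasDerivAt_gammaSmoothing_one ht hf] with y hderiv hzero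
  have hmin : IsLocalMin (gammaSmoothing f 1 t) y := Eventually.of_forall fun z => by
    rw [hzero]
    exact gammaSmoothing_nonneg one_pos ht hpos z
  simpa [hzero, ht.ne'] using hmin.hasDerivAt_eq_zero hderiv

lemma setIntegral_Iic_mul_le_gammaSmoothing_one (ht : 0 < t) (hf : Integrable f)
    (hpos : ∀ x, 0 ≤ f x) (hsupp : ∀ x, x < 0 → f x = 0) {c y : ℝ} (hcy : c ≤ y) :
    (∫ x in Iic c, f x) * (t⁻¹ * Real.exp (-t⁻¹ * y)) ≤ gammaSmoothing f 1 t y := by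
  have hexp := integrableOn_Iic_exp_mul_mul (inv_pos.2 ht).le hf y
  have hmass : ∫ x in Iic c, f x ≤ ∫ x in Iic y, Real.exp (t⁻¹ * x) * f x :=
    calc ∫ x in Iic c, f x ≤ ∫ x in Iic y, f x :=
          setIntegral_mono_set hf.integrableOn (ae_of_all _ hpos)
            (Iic_subset_Iic.2 hcy).eventuallyLE
      _ ≤ ∫ x in Iic y, Real.exp (t⁻¹ * x) * f x := by
        refine setIntegral_mono hf.integrableOn hexp fun x => ?_
        rcases lt_or_ge x 0 with hx | hx
        · simp [hsupp x hx]
        · exact le_mul_of_one_le_left (hpos x) (Real.one_le_exp (by positivity))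
  rw [gammaSmoothing_one_eq_setIntegral_Iic ht hf, mul_comm]
  gcongr

end GammaSmoothing

section Domination

variable {f : ℝ → ℝ} {t : ℝ}

lemma abs_log_gammaSmoothing_one_le (ht : 0 < t) (hpos : ∀ x, 0 ≤ f x) (hprob : ∫ x, f x = 1)
    (hsupp : ∀ x, x < 0 → f x = 0) {c y : ℝ} (hc : 0 < ∫ x in Iic c, f x) (hcy : c ≤ y)
    (hy : 0 ≤ y) :
    |Real.log (gammaSmoothing f 1 t y)| ≤
      |Real.log (∫ x in Iic c, f x)| + |Real.log t| + t⁻¹ * y := by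
  have hf := integrable_of_integral_eq_one hprob
  have hlow := setIntegral_Iic_mul_le_gammaSmoothing_one ht hf hpos hsupp hcy
  have hlow_pos : 0 < (∫ x in Iic c, f x) * (t⁻¹ * Real.exp (-t⁻¹ * y)) := by positivity
  have hup := gammaSmoothing_le le_rfl ht hf hpos y
  rw [hprob, one_mul] at hup
  have hlog_low := Real.log_le_log hlow_pos hlow
  have hlog_up := Real.log_le_log (hlow_pos.trans_le hlow) hup
  rw [Real.log_mul hc.ne' (by positivity), Real.log_mul (by positivity) (by positivity),
    Real.log_exp, Real.log_inv] at hlog_low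
  rw [Real.log_inv] at hlog_up
  have hty : 0 ≤ t⁻¹ * y := by positivity
  rw [abs_le]
  constructor
  · linarith [neg_abs_le (Real.log (∫ x in Iic c, f x)), le_abs_self (Real.log t)]
  · linarith [abs_nonneg (Real.log (∫ x in Iic c, f x)), neg_abs_le (Real.log t)]

lemma mul_abs_log_le {x : ℝ} (hx : 0 ≤ x) : x * |Real.log x| ≤ 1 + x ^ 2 := by
  rcases hx.eq_or_lt with rfl | hx0
  · simp
  rcases le_total x 1 with h1 | h1
  · have := (Real.abs_log_mul_self_lt x hx0 h1).le
    rw [abs_mul, abs_of_pos hx0, mul_comm] at this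
    linarith [sq_nonneg x]
  · rw [abs_of_nonneg (Real.log_nonneg h1)]
    nlinarith [Real.log_le_sub_one_of_pos hx0]

lemma gammaSmoothing_mul_log_le_of_mem_Icc (ht : 0 < t) (hpos : ∀ x, 0 ≤ f x) (hprob : ∫ x, f x = 1)
    (hmean : Integrable fun x => x * f x) (hsupp : ∀ x, x < 0 → f x = 0) {c y : ℝ} (hy : 0 ≤ y)
    (hyc : y ≤ c) :
    (gammaSmoothing f 1 t y + gammaSmoothing f 2 t y) * (1 + |Real.log (gammaSmoothing f 1 t y)|) ≤
      (1 + t⁻¹ * c) * (1 + t⁻¹ + t⁻¹ ^ 2) := by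
  have hf := integrable_of_integral_eq_one hprob
  have hq := gammaSmoothing_two_le ht hf hmean hpos hsupp y
  have hg := gammaSmoothing_le le_rfl ht hf hpos y
  have hg0 := gammaSmoothing_nonneg one_pos ht hpos y
  rw [hprob, one_mul] at hg
  set g := gammaSmoothing f 1 t y
  calc (g + gammaSmoothing f 2 t y) * (1 + |Real.log g|)
      ≤ ((1 + t⁻¹ * y) * g) * (1 + |Real.log g|) := by
        gcongr
        rw [← le_inv_mul_iff₀ ht] at hq
        linarith
    _ = (1 + t⁻¹ * y) * (g + g * |Real.log g|) := by ring
    _ ≤ (1 + t⁻¹ * c) * (t⁻¹ + (1 + t⁻¹ ^ 2)) := by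
      have hg2 : g ^ 2 ≤ t⁻¹ ^ 2 := by gcongr
      have : 0 ≤ 1 + t⁻¹ * c := by have := hy.trans hyc; positivity
      gcongr
      exact (mul_abs_log_le hg0).trans (by gcongr)
    _ = _ := by ring

lemma gammaSmoothing_one_add_two_le {s r : ℝ} (hs : 0 < s) (hr : 2 * s ≤ r) (hf : Integrable f)
    (hpos : ∀ x, 0 ≤ f x) (y : ℝ) :
    gammaSmoothing f 1 s y + gammaSmoothing f 2 s y ≤ 2 * r / s * gammaSmoothing f 1 r y := by
  have hint {n s : ℝ} (hn : 1 ≤ n) (hs : 0 < s) := integrable_mul_gammaPDFReal_sub hn hs hf y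
  rw [gammaSmoothing, gammaSmoothing, gammaSmoothing, ← integral_add (hint le_rfl hs)
    (hint one_le_two hs), ← integral_const_mul]
  refine integral_mono ((hint le_rfl hs).add (hint one_le_two hs))
    ((hint le_rfl (by linarith)).const_mul _) fun x => ?_
  have := mul_le_mul_of_nonneg_left (gammaPDFReal_one_add_two_le hs hr (y - x)) (hpos x)
  linarith

lemma abs_log_le_of_mem_Icc {a b x : ℝ} (ha : 0 < a) (hx : x ∈ Icc a b) :
    |Real.log x| ≤ |Real.log a| + |Real.log b| := by
  have h₁ := Real.log_le_log ha hx.1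
  have h₂ := Real.log_le_log (ha.trans_le hx.1) hx.2
  rw [abs_le]
  constructor <;> linarith [neg_abs_le (Real.log a), le_abs_self (Real.log b),
    abs_nonneg (Real.log a), abs_nonneg (Real.log b)]

lemma gammaSmoothing_mul_log_le_mul_gammaSmoothing (ht : 0 < t) (hpos : ∀ x, 0 ≤ f x)
    (hprob : ∫ x, f x = 1) (hsupp : ∀ x, x < 0 → f x = 0) {c : ℝ} (hc : 0 < ∫ x in Iic c, f x)
    {s y : ℝ} (hs : s ∈ Icc (t / 2) (2 * t)) (hcy : c ≤ y) (hy : 0 ≤ y) :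
    (gammaSmoothing f 1 s y + gammaSmoothing f 2 s y) * (1 + |Real.log (gammaSmoothing f 1 s y)|) ≤
      16 * gammaSmoothing f 1 (4 * t) y * (1 + (|Real.log (∫ x in Iic c, f x)| +
        (|Real.log (t / 2)| + |Real.log (2 * t)|) + (t / 2)⁻¹ * y)) := by
  have hf := integrable_of_integral_eq_one hprob
  have ht2 : 0 < t / 2 := half_pos ht
  have hs0 : 0 < s := ht2.trans_le hs.1
  have hg4 := gammaSmoothing_nonneg one_pos (show 0 < 4 * t by positivity) hpos y
  have hratio : 2 * (4 * t) / s ≤ 16 := by rw [div_le_iff₀ hs0]; linarith [hs.1]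
  have hst : 2 * s ≤ 4 * t := by linarith [hs.2]
  gcongr
  · exact (gammaSmoothing_one_add_two_le hs0 hst hf hpos y).trans (by gcongr)
  · refine (abs_log_gammaSmoothing_one_le hs0 hpos hprob hsupp hc hcy hy).trans ?_
    gcongr
    · exact abs_log_le_of_mem_Icc ht2 hs
    · exact hs.1

lemma exists_setIntegral_Iic_pos (hf : 0 < ∫ x, f x) : ∃ c, 0 < ∫ x in Iic c, f x :=
  (((aecover_Iic tendsto_id).integral_tendsto_of_countably_generated
    (not_imp_comm.1 integral_undef hf.ne')).eventually (lt_mem_nhds hf)).exists (f := atTop)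

lemma exists_integrable_bound_gammaSmoothing_mul_log (ht : 0 < t) (hpos : ∀ x, 0 ≤ f x)
    (hprob : ∫ x, f x = 1) (hmean : Integrable fun x => x * f x)
    (hsupp : ∀ x, x < 0 → f x = 0) :
    ∃ B : ℝ → ℝ, Integrable B ∧ ∀ s ∈ Icc (t / 2) (2 * t), ∀ y,
      (gammaSmoothing f 1 s y + gammaSmoothing f 2 s y) *
        (1 + |Real.log (gammaSmoothing f 1 s y)|) ≤ B y := by
  have hf := integrable_of_integral_eq_one hprob
  obtain ⟨c, hc⟩ := exists_setIntegral_Iic_pos (hprob ▸ one_pos)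
  have ht2 : 0 < t / 2 := half_pos ht
  have ht4 : 0 < 4 * t := by positivity
  set L := |Real.log (∫ x in Iic c, f x)| + (|Real.log (t / 2)| + |Real.log (2 * t)|)
  set g₄ := gammaSmoothing f 1 (4 * t)
  set r := (t / 2)⁻¹
  have hg₄ (y) : 0 ≤ g₄ y := gammaSmoothing_nonneg one_pos ht4 hpos y
  refine ⟨fun y => 16 * g₄ y * (1 + (L + r * y)) +
    (Icc 0 c).indicator (fun _ => (1 + r * c) * (1 + r + r ^ 2)) y, ?_, fun s hs y => ?_⟩
  · refine Integrable.add ?_ ((integrable_indicator_iff measurableSet_Icc).2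
      (integrableOn_const (by simp)))
    refine (((integrable_gammaSmoothing one_pos ht4 hf).const_mul (16 * (1 + L))).add
      ((integrable_mul_gammaSmoothing_one ht4 hf hmean).const_mul (16 * r))).congr
      (ae_of_all _ fun y => ?_)
    simp only [Pi.add_apply]
    ring
  have hs0 : 0 < s := ht2.trans_le hs.1
  rcases lt_or_ge y 0 with hy | hy
  · simp [gammaSmoothing_of_neg hsupp hy, g₄, hy.not_ge]
  rcases le_or_gt y c with hyc | hcy
  · beta_reduce
    rw [indicator_of_mem (mem_Icc.2 ⟨hy, hyc⟩)]
    have hsr : s⁻¹ ≤ r := inv_anti₀ ht2 hs.1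
    have : 0 < r := inv_pos.2 ht2
    have := hg₄ y
    have hc0 : 0 ≤ c := hy.trans hyc
    calc _ ≤ (1 + s⁻¹ * c) * (1 + s⁻¹ + s⁻¹ ^ 2) :=
          gammaSmoothing_mul_log_le_of_mem_Icc hs0 hpos hprob hmean hsupp hy hyc
      _ ≤ (1 + r * c) * (1 + r + r ^ 2) := by gcongr
      _ ≤ _ := le_add_of_nonneg_left (by positivity)
  · beta_reduce
    rw [indicator_of_notMem fun h => hcy.not_ge h.2, add_zero]
    exact gammaSmoothing_mul_log_le_mul_gammaSmoothing ht hpos hprob hsupp hc hs hcy.le hy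

end Domination

section EntropyDerivative

variable {f : ℝ → ℝ} {t : ℝ}

lemma gammaSmoothing_two_eq_zero (ht : 0 < t) (hf : Integrable f)
    (hmean : Integrable fun x => x * f x) (hpos : ∀ x, 0 ≤ f x) (hsupp : ∀ x, x < 0 → f x = 0)
    {y : ℝ} (hy : gammaSmoothing f 1 t y = 0) : gammaSmoothing f 2 t y = 0 := by
  have h := gammaSmoothing_two_le ht hf hmean hpos hsupp y
  rw [hy, mul_zero, mul_nonpos_iff_pos_imp_nonpos] at h
  exact le_antisymm (h.1 ht) (gammaSmoothing_nonneg two_pos ht hpos y)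

lemma hasDerivAt_gammaSmoothing_mul_log (ht : 0 < t) (hf : Integrable f)
    (hmean : Integrable fun x => x * f x) (hpos : ∀ x, 0 ≤ f x) (hsupp : ∀ x, x < 0 → f x = 0)
    (y : ℝ) :
    HasDerivAt (fun s => gammaSmoothing f 1 s y * Real.log (gammaSmoothing f 1 s y))
      (t⁻¹ * ((gammaSmoothing f 2 t y - gammaSmoothing f 1 t y) *
        (Real.log (gammaSmoothing f 1 t y) + 1))) t := by
  by_cases hg : gammaSmoothing f 1 t y = 0
  · have hzero : ∀ᶠ s in 𝓝 t, gammaSmoothing f 1 s y = 0 := by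
      filter_upwards [lt_mem_nhds ht] with s hs
      rwa [gammaSmoothing_one_eq_zero_iff hs hf hpos, ← gammaSmoothing_one_eq_zero_iff ht hf hpos]
    rw [hg, gammaSmoothing_two_eq_zero ht hf hmean hpos hsupp hg, sub_zero, zero_mul, mul_zero]
    refine (hasDerivAt_const t 0).congr_of_eventuallyEq ?_
    filter_upwards [hzero] with s hs using by rw [hs, zero_mul]
  · refine ((Real.hasDerivAt_mul_log hg).comp t
      (hasDerivAt_gammaSmoothing_one ht hf y)).congr_deriv ?_
    ring

lemma norm_sub_mul_log_add_one_le {g q : ℝ} (hg : 0 ≤ g) (hq : 0 ≤ q) :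
    ‖(q - g) * (Real.log g + 1)‖ ≤ (g + q) * (1 + |Real.log g|) := by
  rw [norm_mul, Real.norm_eq_abs, Real.norm_eq_abs]
  gcongr
  · rw [abs_le]
    constructor <;> linarith
  · exact (abs_add_le _ _).trans_eq (by rw [abs_one, add_comm])

lemma hasDerivAt_integral_gammaSmoothing_mul_log (ht : 0 < t) (hpos : ∀ x, 0 ≤ f x)
    (hprob : ∫ x, f x = 1) (hmean : Integrable fun x => x * f x)
    (hsupp : ∀ x, x < 0 → f x = 0) :
    HasDerivAt (fun s => ∫ y, gammaSmoothing f 1 s y * Real.log (gammaSmoothing f 1 s y))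
      (t⁻¹ * ∫ y, (gammaSmoothing f 2 t y - gammaSmoothing f 1 t y) *
        (Real.log (gammaSmoothing f 1 t y) + 1)) t := by
  have hf := integrable_of_integral_eq_one hprob
  obtain ⟨B, hB, hgB⟩ :=
    exists_integrable_bound_gammaSmoothing_mul_log ht hpos hprob hmean hsupp
  have hmeas {n s : ℝ} (hn : 0 < n) (hs : 0 < s) : AEMeasurable (gammaSmoothing f n s) :=
    (integrable_gammaSmoothing hn hs hf).aemeasurable
  have hbound : ∀ y, ∀ s ∈ Icc (t / 2) (2 * t),
      ‖s⁻¹ * ((gammaSmoothing f 2 s y - gammaSmoothing f 1 s y) *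
        (Real.log (gammaSmoothing f 1 s y) + 1))‖ ≤ (t / 2)⁻¹ * B y := fun y s hs => by
    have hs0 : 0 < s := (half_pos ht).trans_le hs.1
    rw [norm_mul, Real.norm_of_nonneg (inv_pos.2 hs0).le]
    gcongr
    · exact hs.1
    · exact (norm_sub_mul_log_add_one_le (gammaSmoothing_nonneg one_pos hs0 hpos y)
        (gammaSmoothing_nonneg two_pos hs0 hpos y)).trans (hgB s hs y)
  rw [← integral_const_mul]
  refine (hasDerivAt_integral_of_dominated_loc_of_deriv_le
    (Icc_mem_nhds (half_lt_self ht) (by linarith)) ?_ ?_ ?_ (ae_of_all _ hbound)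
    (hB.const_mul _) (ae_of_all _ fun y s hs => hasDerivAt_gammaSmoothing_mul_log
      ((half_pos ht).trans_le hs.1) hf hmean hpos hsupp y)).2
  · filter_upwards [lt_mem_nhds ht] with s hs
    exact ((hmeas one_pos hs).mul (hmeas one_pos hs).log).aestronglyMeasurable
  · refine hB.mono' ((hmeas one_pos ht).mul (hmeas one_pos ht).log).aestronglyMeasurable
      (ae_of_all _ fun y => le_trans ?_ (hgB t ⟨by linarith, by linarith⟩ y))
    have hg := gammaSmoothing_nonneg one_pos ht hpos y
    have hq := gammaSmoothing_nonneg two_pos ht hpos y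
    rw [norm_mul, Real.norm_of_nonneg hg, Real.norm_eq_abs]
    gcongr <;> linarith
  · exact ((((hmeas two_pos ht).sub (hmeas one_pos ht)).mul
      ((hmeas one_pos ht).log.add_const 1)).const_mul t⁻¹).aestronglyMeasurable

end EntropyDerivative

section IntegrationByParts

variable {f : ℝ → ℝ} {t : ℝ}

lemma abs_log_add_add_one_le {x ε c : ℝ} (hx : 0 < x) (hxc : x ≤ c) (hε : ε ∈ Icc 0 1) :
    |Real.log (x + ε) + 1| ≤ (1 + c) * (1 + |Real.log x|) := by
  have hlow : Real.log x ≤ Real.log (x + ε) := Real.log_le_log hx (by linarith [hε.1])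
  have hup : Real.log (x + ε) ≤ x + ε - 1 := Real.log_le_sub_one_of_pos (by linarith [hε.1])
  have hc : 0 ≤ c * |Real.log x| := mul_nonneg (hx.le.trans hxc) (abs_nonneg _)
  rw [abs_le]
  constructor
  · linarith [neg_abs_le (Real.log x)]
  · linarith [hε.2, abs_nonneg (Real.log x)]

lemma norm_mul_log_add_add_one_le {g q w ε c : ℝ} (hg : 0 ≤ g) (hgc : g ≤ c)
    (hq : g = 0 → q = 0) (hw : |w| ≤ g + q) (hε : ε ∈ Icc 0 1) :
    ‖w * (Real.log (g + ε) + 1)‖ ≤ (1 + c) * ((g + q) * (1 + |Real.log g|)) := by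
  rcases hg.eq_or_lt with rfl | hg0
  · have : w = 0 := by simpa [hq rfl] using hw
    simp [this, hq rfl]
  · rw [norm_mul, Real.norm_eq_abs, Real.norm_eq_abs]
    calc |w| * |Real.log (g + ε) + 1| ≤ (g + q) * ((1 + c) * (1 + |Real.log g|)) := by
          gcongr
          · exact (abs_nonneg w).trans hw
          · exact abs_log_add_add_one_le hg0 hgc hε
      _ = _ := by ring

lemma norm_mul_sub_div_le {a b g q ε : ℝ} (hg : 0 ≤ g) (hq : 0 ≤ q) (hb : 0 ≤ b) (ha : 0 ≤ a)
    (hqa : q ≤ a * g) (hε : 0 ≤ ε) : ‖q * (b - g) / (g + ε)‖ ≤ a * b + q := by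
  have hquot : q / (g + ε) ≤ a :=
    div_le_of_le_mul₀ (by positivity) ha (hqa.trans (by gcongr; linarith))
  have hfrac : g / (g + ε) ≤ 1 := div_le_one_of_le₀ (by linarith) (by positivity)
  rw [show q * (b - g) / (g + ε) = q / (g + ε) * b - q * (g / (g + ε)) by ring, Real.norm_eq_abs]
  refine (abs_sub _ _).trans ?_
  rw [abs_of_nonneg (by positivity), abs_of_nonneg (by positivity)]
  gcongr
  exact mul_le_of_le_one_right hq hfrac

lemma integrable_gammaSmoothing_mul_log (ht : 0 < t) (hpos : ∀ x, 0 ≤ f x)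
    (hprob : ∫ x, f x = 1) (hmean : Integrable fun x => x * f x)
    (hsupp : ∀ x, x < 0 → f x = 0) :
    Integrable fun y => (gammaSmoothing f 1 t y + gammaSmoothing f 2 t y) *
      (1 + |Real.log (gammaSmoothing f 1 t y)|) := by
  have hf := integrable_of_integral_eq_one hprob
  have hg := (integrable_gammaSmoothing one_pos ht hf).aemeasurable
  have hq := (integrable_gammaSmoothing two_pos ht hf).aemeasurable
  obtain ⟨B, hB, hgB⟩ :=
    exists_integrable_bound_gammaSmoothing_mul_log ht hpos hprob hmean hsupp
  refine hB.mono' (by fun_prop) (ae_of_all _ fun y => ?_)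
  have hg0 := gammaSmoothing_nonneg one_pos ht hpos y
  have hq0 := gammaSmoothing_nonneg two_pos ht hpos y
  rw [Real.norm_of_nonneg (by positivity)]
  exact hgB t ⟨by linarith, by linarith⟩ y

/-- The function whose increments are computed in the integration by parts. The shift `ε` keeps the
logarithm Lipschitz where `gammaSmoothing f 1 t` vanishes. -/
noncomputable def logFlux (f : ℝ → ℝ) (t ε y : ℝ) : ℝ :=
  gammaSmoothing f 2 t y * (Real.log (gammaSmoothing f 1 t y + ε) + 1)

/-- `t` times the almost everywhere derivative of `logFlux f t ε`. -/
noncomputable def logFluxDeriv (f : ℝ → ℝ) (t ε y : ℝ) : ℝ :=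
  (gammaSmoothing f 1 t y - gammaSmoothing f 2 t y) * (Real.log (gammaSmoothing f 1 t y + ε) + 1) +
    gammaSmoothing f 2 t y * (f y - gammaSmoothing f 1 t y) / (gammaSmoothing f 1 t y + ε)

lemma exists_integrable_bound_logFlux (ht : 0 < t) (hpos : ∀ x, 0 ≤ f x)
    (hprob : ∫ x, f x = 1) (hmean : Integrable fun x => x * f x)
    (hsupp : ∀ x, x < 0 → f x = 0) :
    ∃ B : ℝ → ℝ, Integrable B ∧ ∀ ε ∈ Icc (0 : ℝ) 1, ∀ y,
      ‖logFlux f t ε y‖ ≤ B y ∧ ‖logFluxDeriv f t ε y‖ ≤ B y := by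
  have hf := integrable_of_integral_eq_one hprob
  refine ⟨fun y => (1 + t⁻¹) * ((gammaSmoothing f 1 t y + gammaSmoothing f 2 t y) *
    (1 + |Real.log (gammaSmoothing f 1 t y)|)) +
      (t⁻¹ * |y| * f y + gammaSmoothing f 2 t y), ?_, fun ε hε y => ?_⟩
  · refine ((integrable_gammaSmoothing_mul_log ht hpos hprob hmean hsupp).const_mul _).add
      (Integrable.add ?_ (integrable_gammaSmoothing two_pos ht hf))
    refine (hmean.norm.const_mul t⁻¹).congr (ae_of_all _ fun y => ?_)
    simp only [norm_mul, Real.norm_eq_abs, abs_of_nonneg (hpos y), mul_assoc]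
  have hg := gammaSmoothing_nonneg one_pos ht hpos y
  have hq := gammaSmoothing_nonneg two_pos ht hpos y
  have hgt := gammaSmoothing_le le_rfl ht hf hpos y
  rw [hprob, one_mul] at hgt
  have hqg : gammaSmoothing f 2 t y ≤ t⁻¹ * |y| * gammaSmoothing f 1 t y := by
    rw [mul_assoc, le_inv_mul_iff₀ ht]
    exact (gammaSmoothing_two_le ht hf hmean hpos hsupp y).trans (by gcongr; exact le_abs_self y)
  have hlog {w : ℝ} (hw : |w| ≤ gammaSmoothing f 1 t y + gammaSmoothing f 2 t y) :=
    norm_mul_log_add_add_one_le hg hgt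
      (gammaSmoothing_two_eq_zero ht hf hmean hpos hsupp) hw hε
  refine ⟨(hlog (by rw [abs_of_nonneg hq]; linarith)).trans (le_add_of_nonneg_right ?_),
    (norm_add_le _ _).trans (add_le_add (hlog ?_)
      (norm_mul_sub_div_le hg hq (hpos y) (by positivity) hqg hε.1))⟩
  · have := hpos y
    positivity
  · rw [abs_le]
    constructor <;> linarith

lemma aemeasurable_logFluxDeriv (ht : 0 < t) (hf : Integrable f) (ε : ℝ) :
    AEMeasurable (logFluxDeriv f t ε) := by
  have hfm := hf.aemeasurable
  have hg := (integrable_gammaSmoothing one_pos ht hf).aemeasurable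
  have hq := (integrable_gammaSmoothing two_pos ht hf).aemeasurable
  unfold logFluxDeriv
  fun_prop

lemma integrable_logFluxDeriv (ht : 0 < t) (hpos : ∀ x, 0 ≤ f x) (hprob : ∫ x, f x = 1)
    (hmean : Integrable fun x => x * f x) (hsupp : ∀ x, x < 0 → f x = 0) {ε : ℝ}
    (hε : ε ∈ Icc 0 1) : Integrable (logFluxDeriv f t ε) := by
  obtain ⟨B, hB, hbound⟩ := exists_integrable_bound_logFlux ht hpos hprob hmean hsupp
  exact hB.mono' (aemeasurable_logFluxDeriv ht (integrable_of_integral_eq_one hprob)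
    ε).aestronglyMeasurable (ae_of_all _ fun y => (hbound ε hε y).2)

lemma integrable_logFlux (ht : 0 < t) (hpos : ∀ x, 0 ≤ f x) (hprob : ∫ x, f x = 1)
    (hmean : Integrable fun x => x * f x) (hsupp : ∀ x, x < 0 → f x = 0) {ε : ℝ}
    (hε : ε ∈ Icc 0 1) : Integrable (logFlux f t ε) := by
  have hf := integrable_of_integral_eq_one hprob
  have hg := (integrable_gammaSmoothing one_pos ht hf).aemeasurable
  have hq := (integrable_gammaSmoothing two_pos ht hf).aemeasurable
  obtain ⟨B, hB, hbound⟩ := exists_integrable_bound_logFlux ht hpos hprob hmean hsupp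
  exact hB.mono' (by unfold logFlux; fun_prop) (ae_of_all _ fun y => (hbound ε hε y).1)

lemma absolutelyContinuousOnInterval_logFlux (ht : 0 < t) (hf : Integrable f)
    (hmean : Integrable fun x => x * f x) (hpos : ∀ x, 0 ≤ f x) {ε : ℝ} (hε : 0 < ε) (a b : ℝ) :
    AbsolutelyContinuousOnInterval (logFlux f t ε) a b := by
  have hconst (c : ℝ) : AbsolutelyContinuousOnInterval (fun _ => c) a b :=
    contDiffOn_const.absolutelyContinuousOnInterval
  have hgε : AbsolutelyContinuousOnInterval (fun y => gammaSmoothing f 1 t y + ε) a b :=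
    (absolutelyContinuousOnInterval_gammaSmoothing_one ht hf a b).add (hconst ε)
  have hlog : AbsolutelyContinuousOnInterval
      (fun y => Real.log (gammaSmoothing f 1 t y + ε)) a b :=
    absolutelyContinuousOnInterval_comp_lipschitzOnWith
      (lipschitzOnWith_log_Ici (ε := ⟨ε, hε.le⟩) hε) hgε fun y _ =>
        le_add_of_nonneg_left (gammaSmoothing_nonneg one_pos ht hpos y)
  exact (absolutelyContinuousOnInterval_gammaSmoothing_two ht hf hmean a b).mul
    (hlog.add (hconst 1))

lemma ae_hasDerivAt_logFlux (ht : 0 < t) (hf : Integrable f)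
    (hmean : Integrable fun x => x * f x) (hpos : ∀ x, 0 ≤ f x) {ε : ℝ} (hε : 0 < ε) :
    ∀ᵐ y, HasDerivAt (logFlux f t ε) (t⁻¹ * logFluxDeriv f t ε y) y := by
  filter_upwards [ae_hasDerivAt_gammaSmoothing_one ht hf,
    ae_hasDerivAt_gammaSmoothing_two ht hf hmean] with y hg' hq'
  have hgε : gammaSmoothing f 1 t y + ε ≠ 0 :=
    (add_pos_of_nonneg_of_pos (gammaSmoothing_nonneg one_pos ht hpos y) hε).ne'
  refine (hq'.mul (((hg'.add_const ε).log hgε).add_const 1)).congr_deriv ?_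
  rw [logFluxDeriv]
  ring

lemma integral_logFluxDeriv_of_pos (ht : 0 < t) (hpos : ∀ x, 0 ≤ f x)
    (hprob : ∫ x, f x = 1) (hmean : Integrable fun x => x * f x)
    (hsupp : ∀ x, x < 0 → f x = 0) {ε : ℝ} (hε : ε ∈ Ioc 0 1) :
    ∫ y, logFluxDeriv f t ε y = 0 := by
  have hf := integrable_of_integral_eq_one hprob
  have hε' : ε ∈ Icc 0 1 := Ioc_subset_Icc_self hε
  have hzero := integral_eq_zero_of_absolutelyContinuousOnInterval
    (absolutelyContinuousOnInterval_logFlux ht hf hmean hpos hε.1)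
    (ae_hasDerivAt_logFlux ht hf hmean hpos hε.1)
    ((integrable_logFluxDeriv ht hpos hprob hmean hsupp hε').const_mul t⁻¹)
    (integrable_logFlux ht hpos hprob hmean hsupp hε')
  rwa [integral_const_mul, mul_eq_zero_iff_left (inv_ne_zero ht.ne')] at hzero

lemma integral_logFluxDeriv_zero (ht : 0 < t) (hpos : ∀ x, 0 ≤ f x)
    (hprob : ∫ x, f x = 1) (hmean : Integrable fun x => x * f x)
    (hsupp : ∀ x, x < 0 → f x = 0) :
    ∫ y, logFluxDeriv f t 0 y = 0 := by
  have hf := integrable_of_integral_eq_one hprob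
  obtain ⟨B, hB, hbound⟩ := exists_integrable_bound_logFlux ht hpos hprob hmean hsupp
  have hlim (y : ℝ) : Tendsto (fun ε => logFluxDeriv f t ε y) (𝓝[>] 0)
      (𝓝 (logFluxDeriv f t 0 y)) := by
    by_cases hg : gammaSmoothing f 1 t y = 0
    · simp [logFluxDeriv, hg, gammaSmoothing_two_eq_zero ht hf hmean hpos hsupp hg]
    · have hcont : ContinuousAt (fun ε => logFluxDeriv f t ε y) 0 := by
        unfold logFluxDeriv
        fun_prop (disch := simpa using hg)
      exact hcont.tendsto.mono_left nhdsWithin_le_nhds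
  have hε : ∀ᶠ ε : ℝ in 𝓝[>] 0, ε ∈ Ioc 0 1 := Ioc_mem_nhdsGT one_pos
  refine tendsto_nhds_unique (tendsto_integral_filter_of_dominated_convergence B
    (Eventually.of_forall fun ε => (aemeasurable_logFluxDeriv ht hf ε).aestronglyMeasurable)
    (hε.mono fun ε hε => ae_of_all _ fun y => (hbound ε (Ioc_subset_Icc_self hε) y).2) hB
    (ae_of_all _ hlim)) (tendsto_const_nhds.congr' ?_)
  exact hε.mono fun ε hε => (integral_logFluxDeriv_of_pos ht hpos hprob hmean hsupp hε).symm

lemma integrable_sub_mul_log_add_one (ht : 0 < t) (hpos : ∀ x, 0 ≤ f x)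
    (hprob : ∫ x, f x = 1) (hmean : Integrable fun x => x * f x)
    (hsupp : ∀ x, x < 0 → f x = 0) :
    Integrable fun y => (gammaSmoothing f 2 t y - gammaSmoothing f 1 t y) *
      (Real.log (gammaSmoothing f 1 t y) + 1) := by
  have hf := integrable_of_integral_eq_one hprob
  have hg := (integrable_gammaSmoothing one_pos ht hf).aemeasurable
  have hq := (integrable_gammaSmoothing two_pos ht hf).aemeasurable
  exact (integrable_gammaSmoothing_mul_log ht hpos hprob hmean hsupp).mono' (by fun_prop)
    (ae_of_all _ fun y => norm_sub_mul_log_add_one_le (gammaSmoothing_nonneg one_pos ht hpos y)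
      (gammaSmoothing_nonneg two_pos ht hpos y))

lemma ae_mul_gammaSmoothing_div_eq (ht : 0 < t) (hf : Integrable f)
    (hmean : Integrable fun x => x * f x) (hpos : ∀ x, 0 ≤ f x) (hsupp : ∀ x, x < 0 → f x = 0) :
    ∀ᵐ y, f y * (gammaSmoothing (fun x => x * f x) 1 t y / gammaSmoothing f 1 t y) =
      y * f y - t * (gammaSmoothing f 2 t y + (logFluxDeriv f t 0 y +
        (gammaSmoothing f 2 t y - gammaSmoothing f 1 t y) *
          (Real.log (gammaSmoothing f 1 t y) + 1))) := by
  filter_upwards [ae_eq_zero_of_gammaSmoothing_one_eq_zero ht hf hpos] with y hfy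
  rw [logFluxDeriv, add_zero]
  by_cases hg : gammaSmoothing f 1 t y = 0
  · simp [hg, hfy hg, gammaSmoothing_two_eq_zero ht hf hmean hpos hsupp hg]
  · rw [eq_sub_of_add_eq' (eq_add_of_sub_eq (mul_gammaSmoothing_one_sub ht hf hmean y)).symm]
    field_simp
    ring

lemma integral_mul_gammaSmoothing_div (ht : 0 < t) (hpos : ∀ x, 0 ≤ f x)
    (hprob : ∫ x, f x = 1) (hmean : Integrable fun x => x * f x)
    (hsupp : ∀ x, x < 0 → f x = 0) :
    ∫ y, f y * (gammaSmoothing (fun x => x * f x) 1 t y / gammaSmoothing f 1 t y) =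
      (∫ x, x * f x) - t * (1 + ∫ y, (gammaSmoothing f 2 t y - gammaSmoothing f 1 t y) *
        (Real.log (gammaSmoothing f 1 t y) + 1)) := by
  have hf := integrable_of_integral_eq_one hprob
  have hq := integrable_gammaSmoothing two_pos ht hf
  have hflux := integrable_logFluxDeriv ht hpos hprob hmean hsupp ⟨le_rfl, zero_le_one⟩
  have hlog := integrable_sub_mul_log_add_one ht hpos hprob hmean hsupp
  rw [integral_congr_ae (ae_mul_gammaSmoothing_div_eq ht hf hmean hpos hsupp),
    integral_sub hmean ((hq.fun_add (hflux.fun_add hlog)).const_mul t), integral_const_mul,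
    integral_add hq (hflux.fun_add hlog), integral_add hflux hlog,
    integral_logFluxDeriv_zero ht hpos hprob hmean hsupp, integral_gammaSmoothing two_pos ht hf,
    hprob, zero_add]

end IntegrationByParts

section Channel

variable {f : ℝ → ℝ} {t : ℝ}

lemma hasDerivAt_entropy_gammaSmoothing (ht : 0 < t) (hpos : ∀ x, 0 ≤ f x)
    (hprob : ∫ x, f x = 1) (hmean : Integrable fun x => x * f x)
    (hsupp : ∀ x, x < 0 → f x = 0) :
    HasDerivAt (fun s => -∫ y, gammaSmoothing f 1 s y * Real.log (gammaSmoothing f 1 s y))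
      ((t ^ 2)⁻¹ * (t - (∫ x, x * f x) +
        ∫ y, f y * (gammaSmoothing (fun x => x * f x) 1 t y / gammaSmoothing f 1 t y))) t := by
  refine (hasDerivAt_integral_gammaSmoothing_mul_log ht hpos hprob hmean hsupp).neg.congr_deriv ?_
  rw [integral_mul_gammaSmoothing_div ht hpos hprob hmean hsupp]
  field_simp
  ring

-- At `t = 0` both sides are `0`, since `0⁻¹ = 0`.
lemma inv_mul_exp_neg_div_eq_gammaPDFReal_one {t : ℝ} (ht : 0 ≤ t) (u : ℝ) :
    (t⁻¹ * if 0 ≤ u / t then Real.exp (-(u / t)) else 0) = gammaPDFReal 1 t⁻¹ u := by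
  rcases ht.eq_or_lt with rfl | ht
  · simp [gammaPDFReal_one]
  · simp only [gammaPDFReal_one, div_eq_inv_mul, mul_nonneg_iff_of_pos_left (inv_pos.2 ht), mul_ite,
      mul_zero]

lemma integrable_mul_of_integrable_exp_mul (hf : AEStronglyMeasurable f) (hpos : ∀ x, 0 ≤ f x)
    (hsupp : ∀ x, x < 0 → f x = 0) (hexp : Integrable fun x => Real.exp x * f x) :
    Integrable fun x => x * f x := by
  refine hexp.mono' (aestronglyMeasurable_id.mul hf) (ae_of_all _ fun x => ?_)
  rcases lt_or_ge x 0 with hx | hx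
  · simp [hsupp x hx]
  · rw [Real.norm_of_nonneg (mul_nonneg hx (hpos x))]
    exact mul_le_mul_of_nonneg_right (by linarith [Real.add_one_le_exp x]) (hpos x)

end Channel

theorem entropy_derivative_exponential_noise_general
    (fX fW : ℝ → ℝ)
    (hfX_nonneg : ∀ x, 0 ≤ fX x) (hfX_prob : (∫ x, fX x) = 1)
    (hfX_supp : ∀ x, x < 0 → fX x = 0)
    (hfX_mean : Integrable (fun x => x * fX x))
    (hfW : ∀ w, fW w = if 0 ≤ w then Real.exp (-w) else 0)
    (p : ℝ → ℝ → ℝ → ℝ)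
    (hp : ∀ y x b, p y x b = (Real.sqrt b)⁻¹ * fW ((y - x) / Real.sqrt b))
    (fY : ℝ → ℝ → ℝ)
    (hfY : ∀ b y, fY b y = ∫ x, fX x * p y x b)
    (a : ℝ) (ha : 0 < a)
    (m : ℝ → ℝ)
    (hm : ∀ y, m y = (∫ x, x * fX x * p y x a) / fY a y) :
    HasDerivAt (fun b => -∫ y, fY b y * Real.log (fY b y))
      ((1 / (2 * a * Real.sqrt a)) *
        (Real.sqrt a - (∫ x, x * fX x) + ∫ y, fX y * m y)) a := by
  have hp_gamma (y x b) : p y x b = gammaPDFReal 1 (Real.sqrt b)⁻¹ (y - x) := by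
    rw [hp, hfW, inv_mul_exp_neg_div_eq_gammaPDFReal_one (Real.sqrt_nonneg b)]
  have hfY_smoothing (b y) : fY b y = gammaSmoothing fX 1 (Real.sqrt b) y := by
    simp only [hfY, hp_gamma, gammaSmoothing]
  have hm_smoothing (y) : m y = gammaSmoothing (fun x => x * fX x) 1 (Real.sqrt a) y /
      gammaSmoothing fX 1 (Real.sqrt a) y := by
    simp only [hm, hfY_smoothing, hp_gamma, gammaSmoothing]
  have hsqrt : 0 < Real.sqrt a := Real.sqrt_pos.2 ha
  simp only [hfY_smoothing, hm_smoothing]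
  refine ((hasDerivAt_entropy_gammaSmoothing hsqrt hfX_nonneg hfX_prob hfX_mean
    hfX_supp).comp a (Real.hasDerivAt_sqrt ha.ne')).congr_deriv ?_
  rw [Real.sq_sqrt ha.le]
  field_simp

/-- **Entropy derivative for exponential noise.** For a nonnegative `X` with
bounded density and existing moment generating function, and independent unit
exponential noise `W`, `d/da h(Y) = (1/(2a√a))·(√a − E[X] + ∫ f_X(y) m(y;a) dy)`
where `m` is the posterior mean of `X` given `Y = y`. -/
theorem entropy_derivative_exponential_noise
    (fX fW : ℝ → ℝ)
    (hfX_nonneg : ∀ x, 0 ≤ fX x) (hfX_prob : (∫ x, fX x) = 1)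
    (hfX_supp : ∀ x, x < 0 → fX x = 0)
    (hfX_bdd : ∃ B, ∀ x, fX x ≤ B)
    (hfX_mgf : ∀ s : ℝ, Integrable (fun x => Real.exp (s * x) * fX x))
    (hfW : ∀ w, fW w = if 0 ≤ w then Real.exp (-w) else 0)
    (p : ℝ → ℝ → ℝ → ℝ)
    (hp : ∀ y x b, p y x b = (Real.sqrt b)⁻¹ * fW ((y - x) / Real.sqrt b))
    (fY : ℝ → ℝ → ℝ)
    (hfY : ∀ b y, fY b y = ∫ x, fX x * p y x b)
    (a : ℝ) (ha : 0 < a)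
    (m : ℝ → ℝ)
    (hm : ∀ y, m y = (∫ x, x * fX x * p y x a) / fY a y) :
    HasDerivAt (fun b => -∫ y, fY b y * Real.log (fY b y))
      ((1 / (2 * a * Real.sqrt a)) *
        (Real.sqrt a - (∫ x, x * fX x) + ∫ y, fX y * m y)) a := by
  have hfX_mean : Integrable fun x => x * fX x :=
    integrable_mul_of_integrable_exp_mul (integrable_of_integral_eq_one hfX_prob).1 hfX_nonneg
      hfX_supp (by simpa only [one_mul] using hfX_mgf 1)
  exact entropy_derivative_exponential_noise_general fX fW hfX_nonneg hfX_prob hfX_supp hfX_mean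
    hfW p hp fY hfY a ha m hm
end

section
/- (Second derivative of entropy for Gaussian noise) For every a > 0, the differential entropy h(a) = −∫ f_Y(y;a) log f_Y(y;a) dy is twice differentiable in a and d²/da² h(a) = −(1/2) ∫ f_Y(y;a) (∂/∂y S_Y(y;a))² dy, where S_Y(y;a) = ∂/∂y log f_Y(y;a) is the score of the output density. -/
open MeasureTheory Filter

/-!
Write `f` for the output density and `rₖ = ∂ᵧᵏ f / f`, so that `r₁` is the score and
`∂ᵧ r₁ = r₂ - r₁²`. The Gaussian kernel solves the heat equation `∂ₐ f = ½ ∂ᵧ² f`, whence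
`∂ₐ (f log f) = ½ f r₂ (log f + 1)` and `∂ₐ (f r₁²) = f (r₁ r₃ - ½ r₁² r₂)`. Adding `½ f r₁²`,
respectively `f (r₂ - r₁²)²`, turns these into the exact `y`-derivatives of `½ f r₁ (log f + 1)` and
`f (r₁ r₂ - ½ r₁³)`. Integrating, `h' = ½ ∫ f r₁²` (de Bruijn's identity) and
`(∫ f r₁²)' = -∫ f (r₂ - r₁²)²`.

Both differentiations under the integral and both integrations by parts rest on domination. Since
`rₖ` is a posterior mean of a Hermite polynomial in `y - X`, Jensen's inequality bounds `f |rₖ|ⁿ` by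
a Gaussian average of polynomials; a Gaussian lower bound for `f` makes `log f` grow at most
quadratically, and the finite second moment pays for that growth.
-/

namespace GaussianNoise

open Real Set
open scoped Topology

section Domination

variable {T α E E' : Type*} [TopologicalSpace T] [MeasurableSpace α] {ν : Measure α}
  [NormedAddCommGroup E]

/-- The family `F` is dominated, uniformly in the parameter near `b`, by one integrable function:
the hypothesis under which limits and derivatives in the parameter pass under the integral. -/
def DominatedNear (ν : Measure α) (F : T → α → E) (b : T) : Prop :=
  ∃ g : α → ℝ, Integrable g ν ∧ ∀ᶠ a in 𝓝 b, ∀ y, ‖F a y‖ ≤ g y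

theorem DominatedNear.integrable {F : T → α → E} {b : T} (hF : DominatedNear ν F b)
    (hmeas : AEStronglyMeasurable (F b) ν) : Integrable (F b) ν := by
  obtain ⟨g, hg, hFg⟩ := hF
  exact hg.mono' hmeas (.of_forall hFg.self_of_nhds)

theorem DominatedNear.of_norm_le [NormedAddCommGroup E'] {G : T → α → E'} {F : T → α → E} {b : T}
    (hG : DominatedNear ν G b) (C : ℝ) (hFG : ∀ᶠ a in 𝓝 b, ∀ y, ‖F a y‖ ≤ C * ‖G a y‖) :
    DominatedNear ν F b := by
  obtain ⟨g, hg, hGg⟩ := hG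
  refine ⟨fun y => |C| * g y, hg.const_mul _, ?_⟩
  filter_upwards [hFG, hGg] with a hFa hGa y
  calc ‖F a y‖ ≤ |C| * ‖G a y‖ := (hFa y).trans (by gcongr; exact le_abs_self C)
    _ ≤ |C| * g y := by gcongr; exact hGa y

theorem DominatedNear.sum {ι : Type*} {F : ι → T → α → E} {b : T} (s : Finset ι)
    (hF : ∀ i ∈ s, DominatedNear ν (F i) b) :
    DominatedNear ν (fun a y => ∑ i ∈ s, F i a y) b := by
  choose! g hg hFg using hF
  refine ⟨fun y => ∑ i ∈ s, g i y, integrable_finsetSum s hg, ?_⟩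
  filter_upwards [(eventually_all_finset s).2 hFg] with a ha y
  exact norm_sum_le_of_le s fun i hi => ha i hi y

theorem DominatedNear.hasDerivAt_integral [NormedSpace ℝ E] {F F' : ℝ → α → E} {b : ℝ}
    (hF : DominatedNear ν F b) (hF' : DominatedNear ν F' b)
    (hFmeas : ∀ᶠ a in 𝓝 b, AEStronglyMeasurable (F a) ν)
    (hF'meas : AEStronglyMeasurable (F' b) ν)
    (hderiv : ∀ᶠ a in 𝓝 b, ∀ y, HasDerivAt (F · y) (F' a y) a) :
    HasDerivAt (fun a => ∫ y, F a y ∂ν) (∫ y, F' b y ∂ν) b := by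
  obtain ⟨g, hg, hF'g⟩ := hF'
  exact (hasDerivAt_integral_of_dominated_loc_of_deriv_le (hF'g.and hderiv) hFmeas
    (hF.integrable hFmeas.self_of_nhds) hF'meas (.of_forall fun y _ ha => ha.1 y) hg
    (.of_forall fun y _ ha => ha.2 y)).2

end Domination

section Weights

variable {α : Type*} [MeasurableSpace α] {μ : Measure α} {w : α → ℝ}

theorem integral_withDensity_ofReal (hw : ∀ x, 0 ≤ w x) (hwm : AEMeasurable w μ) (g : α → ℝ) :
    ∫ x, g x ∂μ.withDensity (fun x => ENNReal.ofReal (w x)) = ∫ x, w x * g x ∂μ := by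
  rw [integral_withDensity_eq_integral_toReal_smul₀ hwm.ennreal_ofReal (by simp)]
  simp [hw]

theorem integrable_withDensity_ofReal_iff (hw : ∀ x, 0 ≤ w x) (hwm : AEMeasurable w μ)
    {g : α → ℝ} :
    Integrable g (μ.withDensity fun x => ENNReal.ofReal (w x)) ↔
      Integrable (fun x => w x * g x) μ := by
  rw [integrable_withDensity_iff_integrable_smul₀' hwm.ennreal_ofReal (by simp)]
  simp [hw]

theorem neZero_withDensity_ofReal (hw : ∀ x, 0 ≤ w x) (hwm : AEMeasurable w μ)
    (hw0 : ∫ x, w x ∂μ ≠ 0) : NeZero (μ.withDensity fun x => ENNReal.ofReal (w x)) := by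
  refine ⟨fun h => hw0 ?_⟩
  simpa [h] using (integral_withDensity_ofReal hw hwm fun _ => 1).symm

theorem integral_mul_weightedMean_pow_le {g : α → ℝ} {n : ℕ} (hn : Even n) (hw : ∀ x, 0 ≤ w x)
    (hwi : Integrable w μ) (hw0 : ∫ x, w x ∂μ ≠ 0) (hg : Integrable (fun x => w x * g x) μ)
    (hgn : Integrable (fun x => w x * g x ^ n) μ) :
    (∫ x, w x ∂μ) * ((∫ x, w x * g x ∂μ) / ∫ x, w x ∂μ) ^ n ≤ ∫ x, w x * g x ^ n ∂μ := by
  have hwm := hwi.aemeasurable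
  set ν := μ.withDensity fun x => ENNReal.ofReal (w x)
  have : IsFiniteMeasure ν := isFiniteMeasure_withDensity_ofReal hwi.2
  have : NeZero ν := neZero_withDensity_ofReal hw hwm hw0
  have hmass : ν.real univ = ∫ x, w x ∂μ := by
    simpa using integral_withDensity_ofReal hw hwm fun _ => 1
  have hpos : 0 < ∫ x, w x ∂μ := (integral_nonneg hw).lt_of_ne' hw0
  have jensen := hn.convexOn_pow.map_average_le (μ := ν) (f := g) (continuous_pow n).continuousOn
    isClosed_univ (by simp) ((integrable_withDensity_ofReal_iff hw hwm).2 hg)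
    ((integrable_withDensity_ofReal_iff hw hwm).2 hgn)
  rw [average_eq, average_eq, hmass, integral_withDensity_ofReal hw hwm,
    integral_withDensity_ofReal hw hwm, smul_eq_mul, smul_eq_mul, inv_mul_eq_div,
    inv_mul_eq_div, le_div_iff₀' hpos] at jensen
  exact jensen

end Weights

theorem integrable_integral_mul_comp_sub {μ : Measure ℝ} [SFinite μ] {w ψ : ℝ → ℝ}
    (hw : Integrable w μ) (hψ : Integrable ψ) :
    Integrable fun y => ∫ x, w x * ψ (y - x) ∂μ :=
  (hw.convolution_integrand (ContinuousLinearMap.mul ℝ ℝ) hψ).integral_prod_left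

section Kernel

/-- The density of the centred Gaussian noise of variance `a`. -/
noncomputable def gaussian (a u : ℝ) : ℝ := (√(2 * π * a))⁻¹ * exp (-u ^ 2 / (2 * a))

/-- The quotient `φ⁽ᵏ⁾ / φ` for the Gaussian density `φ` of variance `a`, that is
`(-1)ᵏ a^(-k/2) Heₖ(u / √a)`; the three-term recurrence of the Hermite polynomials `Heₖ` avoids the
half-integer powers of `a`. -/
noncomputable def hermiteRatio : ℕ → ℝ → ℝ → ℝ
  | 0, _, _ => 1
  | 1, a, u => -(u / a)
  | k + 2, a, u => -(u / a) * hermiteRatio (k + 1) a u - (k + 1) / a * hermiteRatio k a u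

theorem gaussian_pos {a : ℝ} (ha : 0 < a) (u : ℝ) : 0 < gaussian a u := by
  unfold gaussian
  positivity

@[fun_prop]
theorem continuous_gaussian (a : ℝ) : Continuous (gaussian a) := by
  unfold gaussian
  fun_prop

@[fun_prop]
theorem continuous_hermiteRatio (k : ℕ) (a : ℝ) : Continuous (hermiteRatio k a) := by
  induction k using Nat.twoStepInduction with
  | zero => exact continuous_const
  | one => exact (continuous_id.div_const a).neg
  | more k ih ih' => simp only [hermiteRatio]; fun_prop

theorem hasDerivAt_gaussian {a : ℝ} (ha : a ≠ 0) (u : ℝ) :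
    HasDerivAt (gaussian a) (-(u / a) * gaussian a u) u := by
  have hexponent : HasDerivAt (fun u : ℝ => -u ^ 2 / (2 * a)) (-(u / a)) u := by
    refine (((hasDerivAt_pow 2 u).neg).div_const (2 * a)).congr_deriv ?_
    field_simp
    simp
  refine (hexponent.exp.const_mul (√(2 * π * a))⁻¹).congr_deriv ?_
  simp only [gaussian]
  ring

theorem hasDerivAt_gaussian_variance {a : ℝ} (ha : 0 < a) (u : ℝ) :
    HasDerivAt (gaussian · u) ((u ^ 2 / a ^ 2 - 1 / a) / 2 * gaussian a u) a := by
  have hexponent : HasDerivAt (fun a : ℝ => -u ^ 2 / (2 * a)) (u ^ 2 / (2 * a ^ 2)) a := by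
    refine ((hasDerivAt_const a (-u ^ 2)).fun_div ((hasDerivAt_id a).const_mul 2)
      (by simpa using ha.ne')).congr_deriv ?_
    simp only [id]
    field_simp
    ring
  have hfactor : HasDerivAt (fun a : ℝ => (√(2 * π * a))⁻¹)
      (-(1 / (2 * a)) * (√(2 * π * a))⁻¹) a := by
    refine ((((hasDerivAt_id a).const_mul (2 * π)).sqrt (by simp only [id]; positivity)).fun_inv
      (by simp only [id]; positivity)).congr_deriv ?_
    simp only [id]
    rw [sq_sqrt (by positivity)]
    field_simp
  refine (hfactor.mul hexponent.exp).congr_deriv ?_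
  simp only [gaussian]
  ring

theorem hermiteRatio_add_two_mul_gaussian (k : ℕ) (a u : ℝ) :
    hermiteRatio (k + 2) a u * gaussian a u =
      -(u / a) * (hermiteRatio (k + 1) a u * gaussian a u) -
        (k + 1) / a * (hermiteRatio k a u * gaussian a u) := by
  simp only [hermiteRatio]
  ring

theorem hasDerivAt_hermiteRatio_mul_gaussian (k : ℕ) {a : ℝ} (ha : a ≠ 0) (u : ℝ) :
    HasDerivAt (fun u => hermiteRatio k a u * gaussian a u)
      (hermiteRatio (k + 1) a u * gaussian a u) u := by
  induction k using Nat.twoStepInduction with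
  | zero => simpa [hermiteRatio] using hasDerivAt_gaussian ha u
  | one =>
    refine (((hasDerivAt_id u).div_const a).fun_neg.mul (hasDerivAt_gaussian ha u)).congr_deriv ?_
    simp only [hermiteRatio, id]
    push_cast
    ring
  | more k ih ih' =>
    simp only [hermiteRatio_add_two_mul_gaussian k]
    refine ((((hasDerivAt_id u).div_const a).fun_neg.fun_mul ih').fun_sub
      (ih.const_mul ((k + 1) / a))).congr_deriv ?_
    simp only [hermiteRatio, id]
    push_cast
    ring

theorem hasDerivAt_hermiteRatio_mul_gaussian_variance (k : ℕ) {a : ℝ} (ha : 0 < a) (u : ℝ) :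
    HasDerivAt (fun a => hermiteRatio k a u * gaussian a u)
      (hermiteRatio (k + 2) a u * gaussian a u / 2) a := by
  have hquot (c : ℝ) : HasDerivAt (fun a => c / a) (-(c / a ^ 2)) a := by
    simpa [div_eq_mul_inv] using (hasDerivAt_inv ha.ne').const_mul c
  induction k using Nat.twoStepInduction with
  | zero =>
    simp only [hermiteRatio, one_mul]
    refine (hasDerivAt_gaussian_variance ha u).congr_deriv ?_
    push_cast
    ring
  | one =>
    refine ((hquot u).fun_neg.mul (hasDerivAt_gaussian_variance ha u)).congr_deriv ?_
    simp only [hermiteRatio]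
    push_cast
    ring
  | more k ih ih' =>
    simp only [hermiteRatio_add_two_mul_gaussian k]
    refine (((hquot u).fun_neg.fun_mul ih').fun_sub
      ((hquot (k + 1)).fun_mul ih)).congr_deriv ?_
    simp only [hermiteRatio]
    push_cast
    ring

theorem exists_abs_hermiteRatio_le (k : ℕ) {c : ℝ} (hc : 0 < c) :
    ∃ C, ∀ a, c ≤ a → ∀ u, |hermiteRatio k a u| ≤ C * (1 + |u|) ^ k := by
  induction k using Nat.twoStepInduction with
  | zero => exact ⟨1, fun a _ u => by simp [hermiteRatio]⟩
  | one =>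
    refine ⟨1 / c, fun a ha u => ?_⟩
    have ha0 := hc.trans_le ha
    calc |hermiteRatio 1 a u| = 1 / a * |u| := by
          simp only [hermiteRatio]; rw [abs_neg, abs_div, abs_of_pos ha0]; ring
      _ ≤ 1 / c * (1 + |u|) ^ 1 := by rw [pow_one]; gcongr; linarith
  | more k ih ih' =>
    obtain ⟨C, hC⟩ := ih
    obtain ⟨C', hC'⟩ := ih'
    refine ⟨1 / c * C' + (k + 1) / c * C, fun a ha u => ?_⟩
    have ha0 := hc.trans_le ha
    have hC0 : 0 ≤ C * (1 + |u|) ^ k := (abs_nonneg _).trans (hC a ha u)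
    calc |hermiteRatio (k + 2) a u|
        ≤ |u| / a * |hermiteRatio (k + 1) a u| + (k + 1) / a * |hermiteRatio k a u| := by
          simp only [hermiteRatio]
          refine (abs_sub _ _).trans_eq ?_
          rw [abs_mul, abs_mul, abs_neg, abs_div, abs_div, abs_of_pos ha0,
            abs_of_nonneg (by positivity : (0 : ℝ) ≤ k + 1)]
      _ ≤ (1 + |u|) / c * (C' * (1 + |u|) ^ (k + 1)) +
            (k + 1) / c * (C * (1 + |u|) ^ k * (1 + |u|) ^ 2) := by
          have hone : 1 ≤ (1 + |u|) ^ 2 := one_le_pow₀ (by linarith [abs_nonneg u])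
          gcongr
          · linarith
          · exact hC' a ha u
          · exact (hC a ha u).trans (le_mul_of_one_le_right hC0 hone)
      _ = (1 / c * C' + (k + 1) / c * C) * (1 + |u|) ^ (k + 2) := by ring

theorem exists_one_add_abs_pow_le_exp (m : ℕ) {ε : ℝ} (hε : 0 < ε) :
    ∃ C, ∀ u : ℝ, (1 + |u|) ^ m ≤ C * exp (ε * u ^ 2) := by
  refine ⟨2 ^ m * (m.factorial / ε ^ m * exp ε), fun u => ?_⟩
  have hlin : 1 + |u| ≤ 2 * (1 + u ^ 2) := by
    rw [← sq_abs]
    nlinarith [sq_nonneg (|u| - 1), abs_nonneg u]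
  calc (1 + |u|) ^ m ≤ (2 * (1 + u ^ 2)) ^ m := by gcongr
    _ = 2 ^ m * (m.factorial / ε ^ m * ((ε * (1 + u ^ 2)) ^ m / m.factorial)) := by
        rw [mul_pow, mul_pow]; field_simp
    _ ≤ 2 ^ m * (m.factorial / ε ^ m * exp (ε * (1 + u ^ 2))) := by
        gcongr; exact pow_div_factorial_le_exp _ (by positivity) _
    _ = 2 ^ m * (m.factorial / ε ^ m * exp ε) * exp (ε * u ^ 2) := by
        rw [mul_add, mul_one, exp_add]; ring

theorem gaussian_le {c d a : ℝ} (hc : 0 < c) (ha : a ∈ Icc c d) (u : ℝ) :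
    gaussian a u ≤ (√(2 * π * c))⁻¹ * exp (-u ^ 2 / (2 * d)) := by
  have ha0 := hc.trans_le ha.1
  unfold gaussian
  gcongr ?_⁻¹ * exp ?_
  · exact sqrt_le_sqrt (by gcongr; exact ha.1)
  · rw [neg_div, neg_div, neg_le_neg_iff]
    gcongr
    exact ha.2

theorem exists_abs_hermiteRatio_pow_mul_gaussian_le (k n : ℕ) {c : ℝ} (hc : 0 < c) (d : ℝ) :
    ∃ C, 0 ≤ C ∧ ∀ a ∈ Icc c d, ∀ u,
      (1 + u ^ 2) * (|hermiteRatio k a u| ^ n * gaussian a u) ≤ C * exp (-(4 * d)⁻¹ * u ^ 2) := by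
  rcases lt_or_ge d c with hdc | hcd
  · exact ⟨0, le_rfl, fun a ha => absurd (ha.1.trans ha.2) hdc.not_ge⟩
  have hd : 0 < d := hc.trans_le hcd
  obtain ⟨C, hC⟩ := exists_abs_hermiteRatio_le k hc
  obtain ⟨B, hB⟩ := exists_one_add_abs_pow_le_exp (2 + k * n) (inv_pos.2 (mul_pos four_pos hd))
  have hC0 : 0 ≤ C := by simpa using (abs_nonneg _).trans (hC c le_rfl 0)
  have hB0 : 0 ≤ B := zero_le_one.trans (by simpa using hB 0)
  refine ⟨C ^ n * B * (√(2 * π * c))⁻¹, by positivity, fun a ha u => ?_⟩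
  have hsq : 1 + u ^ 2 ≤ (1 + |u|) ^ 2 := by
    rw [← sq_abs]
    linarith [abs_nonneg u, add_sq 1 |u|]
  calc (1 + u ^ 2) * (|hermiteRatio k a u| ^ n * gaussian a u)
      ≤ (1 + |u|) ^ 2 * ((C * (1 + |u|) ^ k) ^ n *
          ((√(2 * π * c))⁻¹ * exp (-u ^ 2 / (2 * d)))) := by
        have := (gaussian_pos (hc.trans_le ha.1) u).le
        gcongr
        · exact hC a ha.1 u
        · exact gaussian_le hc ha u
    _ = C ^ n * (1 + |u|) ^ (2 + k * n) * (√(2 * π * c))⁻¹ * exp (-u ^ 2 / (2 * d)) := by ring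
    _ ≤ C ^ n * (B * exp ((4 * d)⁻¹ * u ^ 2)) * (√(2 * π * c))⁻¹ * exp (-u ^ 2 / (2 * d)) := by
        gcongr; exact hB u
    _ = C ^ n * B * (√(2 * π * c))⁻¹ * (exp ((4 * d)⁻¹ * u ^ 2) * exp (-u ^ 2 / (2 * d))) := by
        ring
    _ = C ^ n * B * (√(2 * π * c))⁻¹ * exp (-(4 * d)⁻¹ * u ^ 2) := by
        rw [← exp_add]; congr 2; field_simp; ring

theorem exists_abs_hermiteRatio_pow_mul_gaussian_le_const (k n : ℕ) {c : ℝ} (hc : 0 < c) (d : ℝ) :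
    ∃ C, ∀ a ∈ Icc c d, ∀ u, |hermiteRatio k a u ^ n * gaussian a u| ≤ C := by
  obtain ⟨C, hC0, hC⟩ := exists_abs_hermiteRatio_pow_mul_gaussian_le k n hc d
  refine ⟨C, fun a ha u => ?_⟩
  have ha0 := hc.trans_le ha.1
  have hd : 0 < d := ha0.trans_le ha.2
  have hφ := gaussian_pos ha0 u
  calc |hermiteRatio k a u ^ n * gaussian a u|
      = |hermiteRatio k a u| ^ n * gaussian a u := by rw [abs_mul, abs_pow, abs_of_pos hφ]
    _ ≤ (1 + u ^ 2) * (|hermiteRatio k a u| ^ n * gaussian a u) :=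
        le_mul_of_one_le_left (by positivity) (by linarith [sq_nonneg u])
    _ ≤ C * exp (-(4 * d)⁻¹ * u ^ 2) := hC a ha u
    _ ≤ C := mul_le_of_le_one_right hC0 <| exp_le_one_iff.2 <| by
        rw [neg_mul]; exact neg_nonpos.2 (by positivity)

theorem exists_one_add_sq_mul_hermiteRatio_pow_mul_gaussian_sub_le (k : ℕ) {n : ℕ} (hn : Even n)
    {c : ℝ} (hc : 0 < c) (d : ℝ) :
    ∃ C, ∀ a ∈ Icc c d, ∀ x y,
      (1 + y ^ 2) * (hermiteRatio k a (y - x) ^ n * gaussian a (y - x)) ≤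
        C * (1 + x ^ 2) * exp (-(4 * d)⁻¹ * (y - x) ^ 2) := by
  obtain ⟨C, -, hC⟩ := exists_abs_hermiteRatio_pow_mul_gaussian_le k n hc d
  refine ⟨2 * C, fun a ha x y => ?_⟩
  have hweight : 1 + y ^ 2 ≤ 2 * (1 + x ^ 2) * (1 + (y - x) ^ 2) := by
    nlinarith [sq_nonneg (y - 2 * x), mul_nonneg (sq_nonneg x) (sq_nonneg (y - x))]
  have hφ := (gaussian_pos (hc.trans_le ha.1) (y - x)).le
  rw [← hn.pow_abs]
  calc (1 + y ^ 2) * (|hermiteRatio k a (y - x)| ^ n * gaussian a (y - x))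
      ≤ 2 * (1 + x ^ 2) * (1 + (y - x) ^ 2) *
          (|hermiteRatio k a (y - x)| ^ n * gaussian a (y - x)) := by gcongr
    _ = 2 * (1 + x ^ 2) *
          ((1 + (y - x) ^ 2) * (|hermiteRatio k a (y - x)| ^ n * gaussian a (y - x))) := by ring
    _ ≤ 2 * (1 + x ^ 2) * (C * exp (-(4 * d)⁻¹ * (y - x) ^ 2)) :=
        mul_le_mul_of_nonneg_left (hC a ha _) (by positivity)
    _ = 2 * C * (1 + x ^ 2) * exp (-(4 * d)⁻¹ * (y - x) ^ 2) := by ring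

end Kernel

section OutputDensity

/-- The density `f_Y(y; a)` of `X + √a W`, where `X` has law `μ` and `W` is an independent standard
Gaussian. -/
noncomputable def density (μ : Measure ℝ) (a y : ℝ) : ℝ := ∫ x, gaussian a (y - x) ∂μ

/-- The `k`-th derivative of `density μ a`, with the differentiation carried out under the
integral. -/
noncomputable def densityDeriv (μ : Measure ℝ) (k : ℕ) (a y : ℝ) : ℝ :=
  ∫ x, hermiteRatio k a (y - x) * gaussian a (y - x) ∂μ

/-- The quotient `f_Y⁽ᵏ⁾ / f_Y`; for `k = 1` it is the score of the output. -/
noncomputable def densityRatio (μ : Measure ℝ) (k : ℕ) (a y : ℝ) : ℝ :=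
  densityDeriv μ k a y / density μ a y

/-- The differential entropy of the output, `-∫ f_Y log f_Y`. -/
noncomputable def outputEntropy (μ : Measure ℝ) (a : ℝ) : ℝ :=
  -∫ y, density μ a y * log (density μ a y)

/-- The Fisher information of the output: the mean square of its score. -/
noncomputable def outputFisherInfo (μ : Measure ℝ) (a : ℝ) : ℝ :=
  ∫ y, density μ a y * densityRatio μ 1 a y ^ 2

variable {μ : Measure ℝ}

theorem densityDeriv_zero : densityDeriv μ 0 = density μ := by
  ext a y
  simp [densityDeriv, density, hermiteRatio]

variable [IsFiniteMeasure μ] {a : ℝ}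

theorem integrable_hermiteRatio_pow_mul_gaussian (k n : ℕ) (ha : 0 < a) (y : ℝ) :
    Integrable (fun x => hermiteRatio k a (y - x) ^ n * gaussian a (y - x)) μ := by
  obtain ⟨C, hC⟩ := exists_abs_hermiteRatio_pow_mul_gaussian_le_const k n ha a
  exact .of_bound (by fun_prop) C (.of_forall fun x => hC a ⟨le_rfl, le_rfl⟩ _)

theorem integrable_gaussian_sub (ha : 0 < a) (y : ℝ) :
    Integrable (fun x => gaussian a (y - x)) μ := by
  simpa [hermiteRatio] using integrable_hermiteRatio_pow_mul_gaussian (μ := μ) 0 1 ha y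

theorem hasDerivAt_densityDeriv (k : ℕ) (ha : 0 < a) (y : ℝ) :
    HasDerivAt (densityDeriv μ k a) (densityDeriv μ (k + 1) a y) y := by
  have hdom (j : ℕ) :
      DominatedNear μ (fun y x => hermiteRatio j a (y - x) * gaussian a (y - x)) y := by
    obtain ⟨C, hC⟩ := exists_abs_hermiteRatio_pow_mul_gaussian_le_const j 1 ha a
    exact ⟨fun _ => C, integrable_const C, .of_forall fun y x => by
      simpa using hC a ⟨le_rfl, le_rfl⟩ (y - x)⟩
  exact (hdom k).hasDerivAt_integral (hdom (k + 1)) (.of_forall fun y => by fun_prop)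
    (by fun_prop) (.of_forall fun y x =>
      (hasDerivAt_hermiteRatio_mul_gaussian k ha.ne' (y - x)).comp_sub_const y x)

theorem hasDerivAt_densityDeriv_variance (k : ℕ) (ha : 0 < a) (y : ℝ) :
    HasDerivAt (densityDeriv μ k · y) (densityDeriv μ (k + 2) a y / 2) a := by
  have hdom (j : ℕ) :
      DominatedNear μ (fun a x => hermiteRatio j a (y - x) * gaussian a (y - x)) a := by
    obtain ⟨C, hC⟩ := exists_abs_hermiteRatio_pow_mul_gaussian_le_const j 1 (half_pos ha) (2 * a)
    refine ⟨fun _ => C, integrable_const C, ?_⟩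
    filter_upwards [Icc_mem_nhds (half_lt_self ha) (lt_two_mul_self ha)] with c hc x
    simpa using hC c hc (y - x)
  have hdom_half : DominatedNear μ
      (fun a x => hermiteRatio (k + 2) a (y - x) * gaussian a (y - x) / 2) a :=
    (hdom (k + 2)).of_norm_le (1 / 2) (.of_forall fun a x => by
      rw [norm_div, RCLike.norm_ofNat, one_div_mul_eq_div])
  rw [densityDeriv, ← integral_div]
  exact (hdom k).hasDerivAt_integral hdom_half (.of_forall fun a => by fun_prop) (by fun_prop)
    ((lt_mem_nhds ha).mono fun c hc x => hasDerivAt_hermiteRatio_mul_gaussian_variance k hc _)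

theorem integrable_exp_neg_sq_div_const {c : ℝ} (hc : 0 ≤ c) :
    Integrable (fun x : ℝ => exp (-(x ^ 2 / c))) μ :=
  .of_bound (by fun_prop) 1 (.of_forall fun x => by
    rw [norm_of_nonneg (exp_nonneg _), exp_le_one_iff, neg_nonpos]
    positivity)

theorem exp_mul_integral_exp_le_density {c : ℝ} (hc : 0 < c) (hca : c ≤ a) (y : ℝ) :
    (√(2 * π * a))⁻¹ * exp (-(y ^ 2 / a)) * ∫ x, exp (-(x ^ 2 / c)) ∂μ ≤ density μ a y := by
  have ha := hc.trans_le hca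
  rw [density, ← integral_const_mul]
  refine integral_mono ((integrable_exp_neg_sq_div_const hc.le).const_mul _)
    (integrable_gaussian_sub ha y) fun x => ?_
  have hexponent : -(y ^ 2 / a) + -(x ^ 2 / c) ≤ -(y - x) ^ 2 / (2 * a) := by
    have hx : x ^ 2 / a ≤ x ^ 2 / c := by gcongr
    have hsq : (y - x) ^ 2 / (2 * a) ≤ y ^ 2 / a + x ^ 2 / a := by
      rw [← add_div, div_le_div_iff₀ (by positivity) ha]
      nlinarith [mul_nonneg ha.le (sq_nonneg (y + x))]
    rw [neg_div]
    linarith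
  simp only [gaussian]
  rw [mul_assoc, ← exp_add]
  gcongr

theorem density_le (ha : 0 < a) (y : ℝ) : density μ a y ≤ (√(2 * π * a))⁻¹ * μ.real univ := by
  have hbound (x : ℝ) : gaussian a (y - x) ≤ (√(2 * π * a))⁻¹ :=
    mul_le_of_le_one_right (by positivity) <| exp_le_one_iff.2 <| by
      rw [neg_div]; exact neg_nonpos.2 (by positivity)
  calc density μ a y ≤ ∫ _, (√(2 * π * a))⁻¹ ∂μ :=
        integral_mono (integrable_gaussian_sub ha y) (integrable_const _) hbound
    _ = (√(2 * π * a))⁻¹ * μ.real univ := by simp [mul_comm]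

variable [NeZero μ]

theorem integral_exp_neg_sq_div_pos {c : ℝ} (hc : 0 ≤ c) : 0 < ∫ x, exp (-(x ^ 2 / c)) ∂μ :=
  integral_exp_pos (integrable_exp_neg_sq_div_const hc)

theorem density_pos (ha : 0 < a) (y : ℝ) : 0 < density μ a y := by
  have := integral_exp_neg_sq_div_pos (μ := μ) ha.le
  exact lt_of_lt_of_le (by positivity) (exp_mul_integral_exp_le_density ha le_rfl y)

theorem exists_abs_log_density_le {b : ℝ} (hb : 0 < b) :
    ∃ C, ∀ᶠ a in 𝓝 b, ∀ y, |log (density μ a y)| ≤ C * (1 + y ^ 2) := by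
  set κ : ℝ → ℝ := fun a => |log (√(2 * π * a))⁻¹|
  set I := ∫ x, exp (-(x ^ 2 / (b / 2))) ∂μ
  have hI : 0 < I := integral_exp_neg_sq_div_pos (half_pos hb).le
  have hκ : ContinuousAt κ b := by
    have : √(2 * π * b) ≠ 0 := by positivity
    fun_prop (disch := positivity)
  refine ⟨κ b + 1 + |log (μ.real univ)| + |log I| + 2 / b, ?_⟩
  filter_upwards [hκ.eventually_le_const (lt_add_one (κ b)), lt_mem_nhds (half_lt_self hb)]
    with a hκa hba y
  have ha : 0 < a := (half_pos hb).trans hba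
  have hlower := log_le_log (by positivity)
    (exp_mul_integral_exp_le_density (μ := μ) (half_pos hb) hba.le y)
  rw [log_mul (by positivity) hI.ne', log_mul (by positivity) (by positivity), log_exp] at hlower
  have hupper := log_le_log (density_pos ha y) (density_le (μ := μ) ha y)
  rw [log_mul (by positivity) measureReal_univ_ne_zero] at hupper
  have hquad : y ^ 2 / a ≤ 2 / b * y ^ 2 := by
    rw [div_mul_eq_mul_div, div_le_div_iff₀ ha hb]
    nlinarith [sq_nonneg y]
  have hlog : |log (density μ a y)| ≤
      κ a + |log (μ.real univ)| + |log I| + y ^ 2 / a := by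
    have hy : 0 ≤ y ^ 2 / a := by positivity
    have hκ_le := abs_le.1 (le_refl (κ a))
    have hm_le := abs_le.1 (le_refl |log (μ.real univ)|)
    have hI_le := abs_le.1 (le_refl |log I|)
    exact abs_le.2 ⟨by linarith, by linarith⟩
  have hconst : 0 ≤ (κ b + 1 + |log (μ.real univ)| + |log I|) * y ^ 2 := by positivity
  have hb' : 0 < 2 / b := by positivity
  linarith

end OutputDensity

section Calculus

variable {μ : Measure ℝ} [IsFiniteMeasure μ] [NeZero μ] {a : ℝ}

theorem densityRatio_zero (ha : 0 < a) (y : ℝ) : densityRatio μ 0 a y = 1 := by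
  rw [densityRatio, densityDeriv_zero, div_self (density_pos ha y).ne']

theorem hasDerivAt_density (ha : 0 < a) (y : ℝ) :
    HasDerivAt (density μ a) (density μ a y * densityRatio μ 1 a y) y := by
  rw [densityRatio, mul_div_cancel₀ _ (density_pos ha y).ne', ← densityDeriv_zero]
  exact hasDerivAt_densityDeriv 0 ha y

theorem hasDerivAt_density_variance (ha : 0 < a) (y : ℝ) :
    HasDerivAt (density μ · y) (density μ a y * densityRatio μ 2 a y / 2) a := by
  rw [densityRatio, mul_div_cancel₀ _ (density_pos ha y).ne', ← densityDeriv_zero]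
  exact hasDerivAt_densityDeriv_variance 0 ha y

theorem hasDerivAt_densityRatio (k : ℕ) (ha : 0 < a) (y : ℝ) :
    HasDerivAt (densityRatio μ k a)
      (densityRatio μ (k + 1) a y - densityRatio μ k a y * densityRatio μ 1 a y) y := by
  have hpos := density_pos (μ := μ) ha y
  refine ((hasDerivAt_densityDeriv k ha y).fun_div (hasDerivAt_density ha y)
    hpos.ne').congr_deriv ?_
  simp only [densityRatio]
  field_simp

theorem hasDerivAt_densityRatio_variance (k : ℕ) (ha : 0 < a) (y : ℝ) :
    HasDerivAt (densityRatio μ k · y)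
      ((densityRatio μ (k + 2) a y - densityRatio μ k a y * densityRatio μ 2 a y) / 2) a := by
  have hpos := density_pos (μ := μ) ha y
  refine ((hasDerivAt_densityDeriv_variance k ha y).fun_div (hasDerivAt_density_variance ha y)
    hpos.ne').congr_deriv ?_
  simp only [densityRatio]
  field_simp

theorem hasDerivAt_log_density (ha : 0 < a) (y : ℝ) :
    HasDerivAt (fun y => log (density μ a y)) (densityRatio μ 1 a y) y := by
  have hpos := density_pos (μ := μ) ha y
  simpa [hpos.ne'] using (hasDerivAt_density ha y).log hpos.ne'

theorem hasDerivAt_log_density_variance (ha : 0 < a) (y : ℝ) :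
    HasDerivAt (fun a => log (density μ a y)) (densityRatio μ 2 a y / 2) a := by
  have hpos := density_pos (μ := μ) ha y
  simpa [hpos.ne', mul_div_assoc] using (hasDerivAt_density_variance ha y).log hpos.ne'

theorem deriv_deriv_log_density (ha : 0 < a) (y : ℝ) :
    deriv (fun y' => deriv (fun y'' => log (density μ a y'')) y') y =
      densityRatio μ 2 a y - densityRatio μ 1 a y ^ 2 := by
  simp only [(hasDerivAt_log_density ha _).deriv, sq]
  exact (hasDerivAt_densityRatio 1 ha y).deriv

theorem continuous_density (ha : 0 < a) : Continuous (density μ a) :=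
  continuous_iff_continuousAt.2 fun y => (hasDerivAt_density ha y).continuousAt

theorem continuous_densityRatio (k : ℕ) (ha : 0 < a) : Continuous (densityRatio μ k a) :=
  continuous_iff_continuousAt.2 fun y => (hasDerivAt_densityRatio k ha y).continuousAt

theorem continuous_log_density (ha : 0 < a) : Continuous fun y => log (density μ a y) :=
  continuous_iff_continuousAt.2 fun y => (hasDerivAt_log_density ha y).continuousAt

end Calculus

section Envelope

variable {μ : Measure ℝ}

/-- A polynomial majorant for the integrands of the entropy, of the Fisher information and of their
derivatives. Only even powers occur, so that Jensen's inequality bounds it after multiplication by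
the density. -/
noncomputable def envelope (μ : Measure ℝ) (a y : ℝ) : ℝ :=
  1 + densityRatio μ 1 a y ^ 4 + densityRatio μ 2 a y ^ 4 + densityRatio μ 3 a y ^ 4

theorem one_le_envelope (a y : ℝ) : 1 ≤ envelope μ a y := by
  have (k : ℕ) : 0 ≤ densityRatio μ k a y ^ 4 := by positivity
  unfold envelope
  linarith [this 1, this 2, this 3]

theorem one_add_densityRatio_pow_four_le_envelope {k : ℕ} (hk : k ∈ Finset.Icc 1 3) (a y : ℝ) :
    1 + densityRatio μ k a y ^ 4 ≤ envelope μ a y := by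
  have (j : ℕ) : 0 ≤ densityRatio μ j a y ^ 4 := by positivity
  unfold envelope
  fin_cases hk <;> linarith [this 1, this 2, this 3]

theorem abs_densityRatio_le_envelope {k : ℕ} (hk : k ∈ Finset.Icc 1 3) (a y : ℝ) :
    |densityRatio μ k a y| ≤ envelope μ a y := by
  have henv := one_add_densityRatio_pow_four_le_envelope (μ := μ) hk a y
  set r := densityRatio μ k a y
  exact abs_le.2 ⟨by nlinarith [sq_nonneg (r + 1), sq_nonneg (r ^ 2 - 1)],
    by nlinarith [sq_nonneg (r - 1), sq_nonneg (r ^ 2 - 1)]⟩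

theorem sq_densityRatio_le_envelope {k : ℕ} (hk : k ∈ Finset.Icc 1 3) (a y : ℝ) :
    densityRatio μ k a y ^ 2 ≤ envelope μ a y :=
  le_trans (by nlinarith [sq_nonneg (densityRatio μ k a y ^ 2 - 1)])
    (one_add_densityRatio_pow_four_le_envelope hk a y)

end Envelope

section Moments

variable {μ : Measure ℝ} [IsFiniteMeasure μ] [NeZero μ]

theorem density_mul_densityRatio_pow_le (k : ℕ) {n : ℕ} (hn : Even n) {a : ℝ} (ha : 0 < a)
    (y : ℝ) :
    density μ a y * densityRatio μ k a y ^ n ≤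
      ∫ x, hermiteRatio k a (y - x) ^ n * gaussian a (y - x) ∂μ := by
  have hint (m : ℕ) := integrable_hermiteRatio_pow_mul_gaussian (μ := μ) k m ha y
  simp only [mul_comm (hermiteRatio k a _ ^ _)] at hint ⊢
  simpa only [densityRatio, densityDeriv, density, mul_comm (hermiteRatio k a _)] using
    integral_mul_weightedMean_pow_le hn (fun x => (gaussian_pos ha (y - x)).le)
      (integrable_gaussian_sub ha y) (density_pos ha y).ne' (by simpa using hint 1) (hint n)

theorem dominatedNear_density_mul_densityRatio_pow (hμ : Integrable (fun x => x ^ 2) μ) (k : ℕ)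
    {n : ℕ} (hn : Even n) {b : ℝ} (hb : 0 < b) :
    DominatedNear volume
      (fun a y => (1 + y ^ 2) * (density μ a y * densityRatio μ k a y ^ n)) b := by
  set ψ : ℝ → ℝ := fun u => exp (-(4 * (2 * b))⁻¹ * u ^ 2)
  obtain ⟨C, hC⟩ :=
    exists_one_add_sq_mul_hermiteRatio_pow_mul_gaussian_sub_le k hn (half_pos hb) (2 * b)
  have hw : Integrable (fun x : ℝ => C * (1 + x ^ 2)) μ :=
    ((integrable_const 1).add hμ).const_mul _
  have hψ : Integrable ψ := integrable_exp_neg_mul_sq (by positivity)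
  refine ⟨_, integrable_integral_mul_comp_sub hw hψ, ?_⟩
  filter_upwards [Icc_mem_nhds (half_lt_self hb) (lt_two_mul_self hb)] with a hab y
  have ha : 0 < a := (half_pos hb).trans_le hab.1
  have hnonneg : 0 ≤ density μ a y * densityRatio μ k a y ^ n :=
    mul_nonneg (density_pos ha y).le (hn.pow_nonneg _)
  rw [norm_of_nonneg (by positivity)]
  calc (1 + y ^ 2) * (density μ a y * densityRatio μ k a y ^ n)
      ≤ (1 + y ^ 2) * ∫ x, hermiteRatio k a (y - x) ^ n * gaussian a (y - x) ∂μ := by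
        gcongr
        exact density_mul_densityRatio_pow_le k hn ha y
    _ = ∫ x, (1 + y ^ 2) * (hermiteRatio k a (y - x) ^ n * gaussian a (y - x)) ∂μ :=
        (integral_const_mul _ _).symm
    _ ≤ ∫ x, C * (1 + x ^ 2) * ψ (y - x) ∂μ :=
        integral_mono ((integrable_hermiteRatio_pow_mul_gaussian k n ha y).const_mul _)
          (hw.mul_bdd (c := 1) (by fun_prop) (.of_forall fun x => by
            rw [norm_of_nonneg (exp_nonneg _), exp_le_one_iff, neg_mul, neg_nonpos]
            positivity)) (hC a hab · y)

theorem dominatedNear_density_mul (hμ : Integrable (fun x => x ^ 2) μ) {b : ℝ} (hb : 0 < b)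
    {G : ℝ → ℝ → ℝ} (C : ℝ)
    (hG : ∀ᶠ a in 𝓝 b, ∀ y, |G a y| ≤ C * (1 + y ^ 2) * envelope μ a y) :
    DominatedNear volume (fun a y => density μ a y * G a y) b := by
  refine (DominatedNear.sum (Finset.range 4) fun k _ =>
    dominatedNear_density_mul_densityRatio_pow hμ k (by decide : Even 4) hb).of_norm_le C ?_
  filter_upwards [hG, lt_mem_nhds hb] with a hGa ha y
  have hf := density_pos (μ := μ) ha y
  have hsum : ∑ k ∈ Finset.range 4, (1 + y ^ 2) * (density μ a y * densityRatio μ k a y ^ 4) =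
      density μ a y * ((1 + y ^ 2) * envelope μ a y) := by
    simp only [Finset.sum_range_succ, Finset.sum_range_zero, densityRatio_zero ha, envelope]
    ring
  have henv := zero_le_one.trans (one_le_envelope (μ := μ) a y)
  rw [hsum, norm_mul, norm_of_nonneg hf.le, Real.norm_eq_abs,
    norm_of_nonneg (mul_nonneg hf.le (mul_nonneg (by positivity) henv))]
  calc density μ a y * |G a y| ≤ density μ a y * (C * (1 + y ^ 2) * envelope μ a y) := by
        gcongr
        exact hGa y
    _ = C * (density μ a y * ((1 + y ^ 2) * envelope μ a y)) := by ring

end Moments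

section Derivatives

variable {μ : Measure ℝ} [IsFiniteMeasure μ] [NeZero μ] {b : ℝ}

theorem dominatedNear_density_mul_of_le_envelope (hμ : Integrable (fun x => x ^ 2) μ) (hb : 0 < b)
    {G : ℝ → ℝ → ℝ} {C : ℝ} (hG : ∀ a y, |G a y| ≤ C * envelope μ a y) :
    DominatedNear volume (fun a y => density μ a y * G a y) b := by
  refine dominatedNear_density_mul hμ hb C (.of_forall fun a y => (hG a y).trans ?_)
  nlinarith [mul_nonneg ((abs_nonneg _).trans (hG a y)) (sq_nonneg y)]

theorem dominatedNear_density_mul_log_add_mul (hμ : Integrable (fun x => x ^ 2) μ)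
    (hb : 0 < b) (c : ℝ) {G : ℝ → ℝ → ℝ} (hG : ∀ a y, |G a y| ≤ envelope μ a y) :
    DominatedNear volume (fun a y => density μ a y * ((log (density μ a y) + c) * G a y)) b := by
  obtain ⟨C, hC⟩ := exists_abs_log_density_le (μ := μ) hb
  refine dominatedNear_density_mul hμ hb (C + |c|) ?_
  filter_upwards [hC] with a hCa y
  rw [abs_mul]
  have hlog : |log (density μ a y) + c| ≤ (C + |c|) * (1 + y ^ 2) := by
    nlinarith [abs_add_le (log (density μ a y)) c, hCa y, mul_nonneg (abs_nonneg c) (sq_nonneg y)]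
  exact mul_le_mul hlog (hG a y) (abs_nonneg _) ((abs_nonneg _).trans hlog)

theorem dominatedNear_density_mul_score_sq (hμ : Integrable (fun x => x ^ 2) μ) (hb : 0 < b) :
    DominatedNear volume (fun a y => density μ a y * densityRatio μ 1 a y ^ 2) b :=
  dominatedNear_density_mul_of_le_envelope hμ hb (C := 1) fun a y => by
    rw [abs_of_nonneg (sq_nonneg _), one_mul]
    exact sq_densityRatio_le_envelope (by decide) a y

theorem integral_density_mul_log_add_one_mul_densityRatio_two
    (hμ : Integrable (fun x => x ^ 2) μ) (hb : 0 < b) :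
    ∫ y, density μ b y * ((log (density μ b y) + 1) * densityRatio μ 2 b y) =
      -outputFisherInfo μ b := by
  have hf := continuous_density (μ := μ) hb
  have hr (k : ℕ) := continuous_densityRatio (μ := μ) k hb
  have hlog := continuous_log_density (μ := μ) hb
  have hent : Integrable fun y =>
      density μ b y * ((log (density μ b y) + 1) * densityRatio μ 2 b y) :=
    (dominatedNear_density_mul_log_add_mul hμ hb 1
      (abs_densityRatio_le_envelope (by decide))).integrable (by fun_prop)
  have hfisher : Integrable fun y => density μ b y * densityRatio μ 1 b y ^ 2 :=
    (dominatedNear_density_mul_score_sq hμ hb).integrable (by fun_prop)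
  have hflux : Integrable fun y =>
      density μ b y * ((log (density μ b y) + 1) * densityRatio μ 1 b y) :=
    (dominatedNear_density_mul_log_add_mul hμ hb 1
      (abs_densityRatio_le_envelope (by decide))).integrable (by fun_prop)
  have hderiv (y : ℝ) :
      HasDerivAt (fun y => density μ b y * ((log (density μ b y) + 1) * densityRatio μ 1 b y))
        (density μ b y * ((log (density μ b y) + 1) * densityRatio μ 2 b y) +
          density μ b y * densityRatio μ 1 b y ^ 2) y := by
    refine ((hasDerivAt_density hb y).fun_mul (((hasDerivAt_log_density hb y).add_const 1).fun_mul
      (hasDerivAt_densityRatio 1 hb y))).congr_deriv ?_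
    ring
  have hzero := integral_eq_zero_of_hasDerivAt_of_integrable hderiv (hent.add hfisher) hflux
  rw [integral_add hent hfisher] at hzero
  exact eq_neg_of_add_eq_zero_left hzero

theorem hasDerivAt_outputEntropy (hμ : Integrable (fun x => x ^ 2) μ) (hb : 0 < b) :
    HasDerivAt (outputEntropy μ) (1 / 2 * outputFisherInfo μ b) b := by
  have hent :
      DominatedNear volume (fun a y => density μ a y * log (density μ a y)) b := by
    simpa using dominatedNear_density_mul_log_add_mul (G := fun _ _ => 1) hμ hb 0
      (by simpa using one_le_envelope)
  have hent' : DominatedNear volume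
      (fun a y => density μ a y * ((log (density μ a y) + 1) * densityRatio μ 2 a y) / 2) b :=
    (dominatedNear_density_mul_log_add_mul hμ hb 1
      (abs_densityRatio_le_envelope (k := 2) (by decide))).of_norm_le (1 / 2)
        (.of_forall fun a y => by rw [norm_div, RCLike.norm_ofNat, one_div_mul_eq_div])
  have hf (a : ℝ) (ha : 0 < a) := continuous_density (μ := μ) ha
  have hr := continuous_densityRatio (μ := μ) 2 hb
  have hlog (a : ℝ) (ha : 0 < a) := continuous_log_density (μ := μ) ha
  have hderiv : ∀ᶠ a in 𝓝 b, ∀ y, HasDerivAt (fun a => density μ a y * log (density μ a y))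
      (density μ a y * ((log (density μ a y) + 1) * densityRatio μ 2 a y) / 2) a := by
    filter_upwards [lt_mem_nhds hb] with a ha y
    refine ((hasDerivAt_density_variance ha y).fun_mul
      (hasDerivAt_log_density_variance ha y)).congr_deriv ?_
    ring
  refine (hent.hasDerivAt_integral hent' ?_ ?_ hderiv).neg.congr_deriv ?_
  · filter_upwards [lt_mem_nhds hb] with a ha
    exact ((hf a ha).mul (hlog a ha)).aestronglyMeasurable
  · have := hf b hb
    have := hlog b hb
    fun_prop
  · rw [integral_div, integral_density_mul_log_add_one_mul_densityRatio_two hμ hb]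
    ring

theorem dominatedNear_fisherInfo_deriv (hμ : Integrable (fun x => x ^ 2) μ) (hb : 0 < b) :
    DominatedNear volume (fun a y => density μ a y * (densityRatio μ 1 a y * densityRatio μ 3 a y -
      densityRatio μ 1 a y ^ 2 * densityRatio μ 2 a y / 2)) b := by
  refine dominatedNear_density_mul_of_le_envelope hμ hb (C := 4) fun a y => ?_
  have h₁ := sq_densityRatio_le_envelope (μ := μ) (k := 1) (by decide) a y
  have h₁' := one_add_densityRatio_pow_four_le_envelope (μ := μ) (k := 1) (by decide) a y
  have h₂ := sq_densityRatio_le_envelope (μ := μ) (k := 2) (by decide) a y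
  have h₃ := sq_densityRatio_le_envelope (μ := μ) (k := 3) (by decide) a y
  set r₁ := densityRatio μ 1 a y
  set r₂ := densityRatio μ 2 a y
  set r₃ := densityRatio μ 3 a y
  exact abs_le.2 ⟨by nlinarith [sq_nonneg (r₁ + r₃), sq_nonneg (r₁ ^ 2 - r₂)],
    by nlinarith [sq_nonneg (r₁ - r₃), sq_nonneg (r₁ ^ 2 + r₂)]⟩

theorem dominatedNear_fisherInfo_flux (hμ : Integrable (fun x => x ^ 2) μ) (hb : 0 < b) :
    DominatedNear volume (fun a y => density μ a y *
      (densityRatio μ 1 a y * densityRatio μ 2 a y - densityRatio μ 1 a y ^ 3 / 2)) b := by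
  refine dominatedNear_density_mul_of_le_envelope hμ hb (C := 4) fun a y => ?_
  have h₁ := sq_densityRatio_le_envelope (μ := μ) (k := 1) (by decide) a y
  have h₁' := one_add_densityRatio_pow_four_le_envelope (μ := μ) (k := 1) (by decide) a y
  have h₂ := sq_densityRatio_le_envelope (μ := μ) (k := 2) (by decide) a y
  set r₁ := densityRatio μ 1 a y
  set r₂ := densityRatio μ 2 a y
  exact abs_le.2 ⟨by nlinarith [sq_nonneg (r₁ + r₂), sq_nonneg (r₁ ^ 2 - r₁)],
    by nlinarith [sq_nonneg (r₁ - r₂), sq_nonneg (r₁ ^ 2 + r₁)]⟩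

theorem dominatedNear_density_mul_score_deriv_sq (hμ : Integrable (fun x => x ^ 2) μ)
    (hb : 0 < b) :
    DominatedNear volume
      (fun a y => density μ a y * (densityRatio μ 2 a y - densityRatio μ 1 a y ^ 2) ^ 2) b := by
  refine dominatedNear_density_mul_of_le_envelope hμ hb (C := 4) fun a y => ?_
  have h₁ := one_add_densityRatio_pow_four_le_envelope (μ := μ) (k := 1) (by decide) a y
  have h₂ := sq_densityRatio_le_envelope (μ := μ) (k := 2) (by decide) a y
  rw [abs_of_nonneg (sq_nonneg _)]
  nlinarith [sq_nonneg (densityRatio μ 2 a y + densityRatio μ 1 a y ^ 2)]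

theorem integral_fisherInfo_deriv (hμ : Integrable (fun x => x ^ 2) μ) (hb : 0 < b) :
    ∫ y, density μ b y * (densityRatio μ 1 b y * densityRatio μ 3 b y -
        densityRatio μ 1 b y ^ 2 * densityRatio μ 2 b y / 2) =
      -∫ y, density μ b y * (densityRatio μ 2 b y - densityRatio μ 1 b y ^ 2) ^ 2 := by
  have hf := continuous_density (μ := μ) hb
  have hr (k : ℕ) := continuous_densityRatio (μ := μ) k hb
  have hfisher' := (dominatedNear_fisherInfo_deriv hμ hb).integrable (by fun_prop)
  have hcurv : Integrable fun y =>
      density μ b y * (densityRatio μ 2 b y - densityRatio μ 1 b y ^ 2) ^ 2 :=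
    (dominatedNear_density_mul_score_deriv_sq hμ hb).integrable (by fun_prop)
  have hflux : Integrable fun y => density μ b y *
      (densityRatio μ 1 b y * densityRatio μ 2 b y - densityRatio μ 1 b y ^ 3 / 2) :=
    (dominatedNear_fisherInfo_flux hμ hb).integrable (by fun_prop)
  have hderiv (y : ℝ) : HasDerivAt (fun y => density μ b y *
        (densityRatio μ 1 b y * densityRatio μ 2 b y - densityRatio μ 1 b y ^ 3 / 2))
      (density μ b y * (densityRatio μ 1 b y * densityRatio μ 3 b y -
          densityRatio μ 1 b y ^ 2 * densityRatio μ 2 b y / 2) +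
        density μ b y * (densityRatio μ 2 b y - densityRatio μ 1 b y ^ 2) ^ 2) y := by
    have hr' (k : ℕ) := hasDerivAt_densityRatio (μ := μ) k hb y
    refine ((hasDerivAt_density hb y).fun_mul (((hr' 1).fun_mul (hr' 2)).fun_sub
      (((hr' 1).fun_pow 3).div_const 2))).congr_deriv ?_
    push_cast
    ring
  have hzero := integral_eq_zero_of_hasDerivAt_of_integrable hderiv (hfisher'.add hcurv) hflux
  rw [integral_add hfisher' hcurv] at hzero
  exact eq_neg_of_add_eq_zero_left hzero

theorem hasDerivAt_outputFisherInfo (hμ : Integrable (fun x => x ^ 2) μ) (hb : 0 < b) :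
    HasDerivAt (outputFisherInfo μ)
      (-∫ y, density μ b y * (densityRatio μ 2 b y - densityRatio μ 1 b y ^ 2) ^ 2) b := by
  have hderiv : ∀ᶠ a in 𝓝 b, ∀ y, HasDerivAt (fun a => density μ a y * densityRatio μ 1 a y ^ 2)
      (density μ a y * (densityRatio μ 1 a y * densityRatio μ 3 a y -
        densityRatio μ 1 a y ^ 2 * densityRatio μ 2 a y / 2)) a := by
    filter_upwards [lt_mem_nhds hb] with a ha y
    refine ((hasDerivAt_density_variance ha y).fun_mul
      ((hasDerivAt_densityRatio_variance 1 ha y).fun_pow 2)).congr_deriv ?_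
    push_cast
    ring
  rw [← integral_fisherInfo_deriv hμ hb]
  refine (dominatedNear_density_mul_score_sq hμ hb).hasDerivAt_integral
    (dominatedNear_fisherInfo_deriv hμ hb) ?_ ?_ hderiv
  · filter_upwards [lt_mem_nhds hb] with a ha
    have hf := continuous_density (μ := μ) ha
    have hr := continuous_densityRatio (μ := μ) 1 ha
    fun_prop
  · have hf := continuous_density (μ := μ) hb
    have hr (k : ℕ) := continuous_densityRatio (μ := μ) k hb
    fun_prop

end Derivatives

end GaussianNoise

open GaussianNoise in
theorem entropy_second_derivative_gaussian_noise_general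
    (μ : Measure ℝ) [IsFiniteMeasure μ] [NeZero μ]
    (hμ : Integrable (fun x => x ^ 2) μ)
    (fY : ℝ → ℝ → ℝ)
    (hfY : ∀ a, 0 < a → ∀ y, fY a y =
      ∫ x, (Real.sqrt (2 * Real.pi * a))⁻¹ * Real.exp (-(y - x) ^ 2 / (2 * a)) ∂μ)
    (h : ℝ → ℝ)
    (hh : ∀ a, 0 < a → h a = -∫ y, fY a y * Real.log (fY a y)) :
    ∀ a, 0 < a → DifferentiableAt ℝ h a ∧
      HasDerivAt (deriv h)
        (-(1 / 2) * ∫ y, fY a y *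
          (deriv (fun y' => deriv (fun y'' => Real.log (fY a y'')) y') y) ^ 2)
        a := by
  have hdensity (a : ℝ) (ha : 0 < a) : fY a = density μ a := funext (hfY a ha)
  have hentropy (a : ℝ) (ha : 0 < a) : h a = outputEntropy μ a := by
    rw [hh a ha, hdensity a ha, outputEntropy]
  have hdeBruijn (a : ℝ) (ha : 0 < a) : HasDerivAt h (1 / 2 * outputFisherInfo μ a) a :=
    (hasDerivAt_outputEntropy hμ ha).congr_of_eventuallyEq ((lt_mem_nhds ha).mono hentropy)
  intro a ha
  refine ⟨(hdeBruijn a ha).differentiableAt, ?_⟩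
  simp only [hdensity a ha, deriv_deriv_log_density ha]
  exact (((hasDerivAt_outputFisherInfo hμ ha).const_mul (1 / 2)).congr_of_eventuallyEq
    ((lt_mem_nhds ha).mono fun b hb => (hdeBruijn b hb).deriv)).congr_deriv (by ring)

/-- **Second derivative of the differential entropy for Gaussian noise.**
For the additive Gaussian noise channel `Y = X + √a·W`, the differential
entropy is twice differentiable in `a > 0` and
`d²/da² h(Y) = −(1/2) E_Y[(∂/∂y S_Y(y;a))²]`, where `S_Y` is the score of the
output density. -/
theorem entropy_second_derivative_gaussian_noise
    (fX : ℝ → ℝ)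
    (hfX_nonneg : ∀ x, 0 ≤ fX x)
    (hfX_prob : (∫ x, fX x) = 1)
    (hfX_mom : Integrable (fun x => x ^ 2 * fX x))
    (fY : ℝ → ℝ → ℝ)
    (hfY : ∀ a, 0 < a → ∀ y, fY a y =
      ∫ x, fX x * ((Real.sqrt (2 * Real.pi * a))⁻¹ *
        Real.exp (-(y - x) ^ 2 / (2 * a))))
    (h : ℝ → ℝ)
    (hh : ∀ a, 0 < a → h a = -∫ y, fY a y * Real.log (fY a y)) :
    ∀ a, 0 < a → DifferentiableAt ℝ h a ∧
      HasDerivAt (deriv h)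
        (-(1 / 2) * ∫ y, fY a y *
          (deriv (fun y' => deriv (fun y'' => Real.log (fY a y'')) y') y) ^ 2)
        a := by
  have hfX_int : Integrable fX := .of_integral_ne_zero (by simp [hfX_prob])
  have hfX_meas := hfX_int.aemeasurable
  have := isFiniteMeasure_withDensity_ofReal hfX_int.2
  have := GaussianNoise.neZero_withDensity_ofReal hfX_nonneg hfX_meas (by simp [hfX_prob])
  refine entropy_second_derivative_gaussian_noise_general
    (volume.withDensity fun x => ENNReal.ofReal (fX x)) ?_ fY (fun a ha y => ?_) h hh
  · simpa only [GaussianNoise.integrable_withDensity_ofReal_iff hfX_nonneg hfX_meas, mul_comm]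
      using hfX_mom
  · rw [hfY a ha y, GaussianNoise.integral_withDensity_ofReal hfX_nonneg hfX_meas]
end
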